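/- Let N ≥ 2, k ∈ ℕ and K > 0. There exists a constant R = R(k,K,N) such that the following holds: if Ω ⊆ ℝ^N is an open set of unit volume with λ_k(Ω) ≤ K, then there exists another open set Ω̂ ⊆ ℝ^N, still of unit volume, contained in a cube of side R, and satisfying λ_i(Ω̂) ≤ λ_i(Ω) for every 1 ≤ i ≤ k. -/

import Mathlib

open MeasureTheory Set
open scoped ENNReal

noncomputable section

namespace SpectralMin

/-- Points of `ℝ^N`. -/
abbrev EucN (N : ℕ) := EuclideanSpace ℝ (Fin N)

variable {N : ℕ}

/-- The squared Euclidean norm `|Du(z)|²` of the gradient of `u` at `z`. -/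
def gradSqE (u : EucN N → ℝ) (z : EucN N) : ℝ :=
  ∑ p : Fin N, (fderiv ℝ u z (EuclideanSpace.single p 1)) ^ 2

/-- The Rayleigh quotient `R(u, D) = (∫_D |Du|²) / (∫_D u²)`. -/
def rayleighE (D : Set (EucN N)) (u : EucN N → ℝ) : ℝ :=
  (∫ z in D, gradSqE u z) / (∫ z in D, (u z) ^ 2)

/-- Test functions for `Ω`: smooth functions compactly supported inside `Ω`. -/
def IsTestE (Ω : Set (EucN N)) (φ : EucN N → ℝ) : Prop :=
  ContDiff ℝ (⊤ : ℕ∞) φ ∧ HasCompactSupport φ ∧ tsupport φ ⊆ Ω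

/-- The `k`-th Dirichlet eigenvalue `λ_k(Ω)` of an open set `Ω ⊆ ℝ^N`, via the min-max
(Courant–Fischer) principle over `k`-dimensional subspaces of `C_c^∞(Ω) ⊆ W^{1,2}_0(Ω)`. -/
def eigenvalE (Ω : Set (EucN N)) (k : ℕ) : ℝ :=
  sInf { c : ℝ | ∃ u : Fin k → EucN N → ℝ, (∀ i, IsTestE Ω (u i)) ∧ LinearIndependent ℝ u ∧
    ∀ β : Fin k → ℝ, β ≠ 0 → rayleighE univ (fun z => ∑ i, β i * u i z) ≤ c }

/-!
The min-max values `λ_i(Ω)` over `C_c^∞(Ω)` need not be attained, so they are represented by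
approximate eigenvectors obtained from the Rayleigh–Ritz procedure. Finitely many balls, in a number
depending only on the data, leave outside them only a part of `Ω` with little volume in every unit
ball. Let `g` be a smooth substitute for the distance to their centres. The Caccioppoli inequality
combined with Faber–Krahn inequalities shows that the energy of the approximate eigenvectors in
`{g ≥ s}` decays superlinearly in `s`. Hence there is a level `s` of bounded size at which the
energy beyond `s` is small compared with the volume beyond `s`, and then cutting `Ω` at `s` raises
`λ_1, …, λ_k` by less than is regained by rescaling to unit volume.

The truncated set is covered by boundedly many balls of fixed radius. Clusters of balls that are far
apart can be translated towards each other without changing the spectrum, which makes the set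
bounded; the last dilation to unit volume is bounded because of the Faber–Krahn inequality.
-/

/-! ### Min-max values of a quadratic form -/

section MinMax

open scoped InnerProductSpace
open Module (finrank)
open LinearMap (BilinForm)

variable {X Y : Type*} [NormedAddCommGroup X] [InnerProductSpace ℝ X]
  [NormedAddCommGroup Y] [InnerProductSpace ℝ Y] {Q : BilinForm ℝ X} {Q' : BilinForm ℝ Y}

/-- `c` is an upper bound for the Rayleigh quotient `Q x x / ‖x‖²` on some `n`-dimensional
subspace; multiplying out avoids the junk value `0 / 0` at `x = 0`. -/
def IsMinMaxBound (Q : BilinForm ℝ X) (n : ℕ) (c : ℝ) : Prop :=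
  ∃ V : Submodule ℝ X, FiniteDimensional ℝ V ∧ finrank ℝ V = n ∧ ∀ x ∈ V, Q x x ≤ c * ‖x‖ ^ 2

/-- The `n`-th min-max value (Courant–Fischer eigenvalue, counted from `1`) of a quadratic form. -/
def minMaxValue (Q : BilinForm ℝ X) (n : ℕ) : ℝ := sInf {c | IsMinMaxBound Q n c}

lemma IsMinMaxBound.mono {n : ℕ} {c d : ℝ} (h : IsMinMaxBound Q n c) (hcd : c ≤ d) :
    IsMinMaxBound Q n d := by
  obtain ⟨V, hfin, hV, hle⟩ := h
  exact ⟨V, hfin, hV, fun x hx => (hle x hx).trans (by gcongr)⟩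

lemma IsMinMaxBound.of_le {m n : ℕ} {c : ℝ} (h : IsMinMaxBound Q n c) (hmn : m ≤ n) :
    IsMinMaxBound Q m c := by
  obtain ⟨V, hfin, hV, hle⟩ := h
  let b := Module.finBasisOfFinrankEq ℝ V hV
  have hli : LinearIndependent ℝ fun i : Fin m => (b (Fin.castLE hmn i) : X) :=
    (b.linearIndependent.comp _ (Fin.castLE_injective hmn)).map' V.subtype V.ker_subtype
  refine ⟨Submodule.span ℝ (range fun i : Fin m => (b (Fin.castLE hmn i) : X)),
    FiniteDimensional.span_of_finite ℝ (finite_range _),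
    by rw [finrank_span_eq_card hli, Fintype.card_fin], fun x hx => hle x ?_⟩
  exact Submodule.span_le.2 (by rintro _ ⟨i, rfl⟩; exact (b _).2) hx

lemma IsMinMaxBound.map {c : ℝ} (T : X →ₗ[ℝ] Y) (V : Submodule ℝ X) [FiniteDimensional ℝ V]
    (hinj : ∀ x ∈ V, T x = 0 → x = 0) (hle : ∀ x ∈ V, Q' (T x) (T x) ≤ c * ‖T x‖ ^ 2) :
    IsMinMaxBound Q' (finrank ℝ V) c := by
  refine ⟨V.map T, inferInstance, ?_, ?_⟩
  · have hker : LinearMap.ker (T.domRestrict V) = ⊥ :=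
      LinearMap.ker_eq_bot'.2 fun x hx => Subtype.ext (hinj x x.2 hx)
    rw [← LinearMap.range_domRestrict, LinearMap.finrank_range_of_inj (LinearMap.ker_eq_bot.1 hker)]
  · rintro _ ⟨x, hx, rfl⟩
    exact hle x hx

lemma IsMinMaxBound.exists_ne_zero {n : ℕ} {c : ℝ} (h : IsMinMaxBound Q (n + 1) c) :
    ∃ x, x ≠ 0 ∧ Q x x ≤ c * ‖x‖ ^ 2 := by
  obtain ⟨V, -, hV, hle⟩ := h
  obtain ⟨x, hx, hx0⟩ : ∃ x ∈ V, x ≠ 0 := by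
    refine V.exists_mem_ne_zero_of_ne_bot fun hbot => ?_
    rw [hbot, finrank_bot] at hV
    omega
  exact ⟨x, hx0, hle x hx⟩

lemma IsMinMaxBound.nonneg (hQ : Q.IsNonneg) {n : ℕ} {c : ℝ} (h : IsMinMaxBound Q (n + 1) c) :
    0 ≤ c := by
  obtain ⟨x, hx0, hx⟩ := h.exists_ne_zero
  exact nonneg_of_mul_nonneg_left ((hQ.nonneg x).trans hx) (by positivity : 0 < ‖x‖ ^ 2)

lemma minMaxValue_le (hQ : Q.IsNonneg) {n : ℕ} {c : ℝ} (h : IsMinMaxBound Q (n + 1) c) :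
    minMaxValue Q (n + 1) ≤ c :=
  csInf_le ⟨0, fun _ hd => IsMinMaxBound.nonneg hQ hd⟩ h

lemma isMinMaxBound_minMaxValue_add {n : ℕ} (h : ∃ c, IsMinMaxBound Q n c) {ε : ℝ} (hε : 0 < ε) :
    IsMinMaxBound Q n (minMaxValue Q n + ε) := by
  obtain ⟨c, hc, hlt⟩ := exists_lt_of_csInf_lt h (lt_add_of_pos_right (minMaxValue Q n) hε)
  exact IsMinMaxBound.mono hc hlt.le

lemma minMaxValue_mono (hQ : Q.IsNonneg) {m n : ℕ} (hmn : m + 1 ≤ n)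
    (h : ∃ c, IsMinMaxBound Q n c) : minMaxValue Q (m + 1) ≤ minMaxValue Q n :=
  le_csInf h fun _ hc => minMaxValue_le hQ (hc.of_le hmn)

/-- The output of the Rayleigh–Ritz procedure: orthonormal vectors `e` on whose span `Q` is
diagonal, with increasing diagonal entries `μ`. -/
structure IsRitzSystem (Q : BilinForm ℝ X) {n : ℕ} (e : Fin n → X) (μ : Fin n → ℝ) : Prop where
  orthonormal : Orthonormal ℝ e
  diag : ∀ i j, Q (e i) (e j) = if i = j then μ i else 0
  monotone : Monotone μ

lemma IsRitzSystem.comp {m n : ℕ} {e : Fin n → X} {μ : Fin n → ℝ} (h : IsRitzSystem Q e μ)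
    (f : Fin m ↪o Fin n) : IsRitzSystem Q (e ∘ f) (μ ∘ f) where
  orthonormal := h.orthonormal.comp f f.injective
  diag i j := by simp only [Function.comp_apply, h.diag, f.injective.eq_iff]
  monotone := h.monotone.comp f.monotone

lemma IsRitzSystem.apply_sum_self {n : ℕ} {e : Fin n → X} {μ : Fin n → ℝ}
    (h : IsRitzSystem Q e μ) (b : Fin n → ℝ) :
    Q (∑ i, b i • e i) (∑ i, b i • e i) = ∑ i, μ i * b i ^ 2 := by
  simp only [map_sum, LinearMap.sum_apply, map_smul, LinearMap.smul_apply, smul_eq_mul, h.diag]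
  exact Finset.sum_congr rfl fun i _ => by simp; ring

lemma norm_sq_sum_smul_of_orthonormal {ι : Type*} [Fintype ι] {e : ι → X} (he : Orthonormal ℝ e)
    (b : ι → ℝ) : ‖∑ i, b i • e i‖ ^ 2 = ∑ i, b i ^ 2 := by
  rw [← real_inner_self_eq_norm_sq, he.inner_sum]
  simp [sq]

lemma IsRitzSystem.isMinMaxBound {n : ℕ} {e : Fin (n + 1) → X} {μ : Fin (n + 1) → ℝ}
    (h : IsRitzSystem Q e μ) : IsMinMaxBound Q (n + 1) (μ (Fin.last n)) := by
  refine ⟨Submodule.span ℝ (range e), FiniteDimensional.span_of_finite ℝ (finite_range e),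
    by simp [finrank_span_eq_card h.orthonormal.linearIndependent], fun x hx => ?_⟩
  obtain ⟨b, rfl⟩ := (Submodule.mem_span_range_iff_exists_fun ℝ).1 hx
  rw [h.apply_sum_self, norm_sq_sum_smul_of_orthonormal h.orthonormal, Finset.mul_sum]
  gcongr with i
  exact h.monotone (Fin.le_last i)

lemma IsRitzSystem.minMaxValue_le (hQ : Q.IsNonneg) {n : ℕ} {e : Fin n → X} {μ : Fin n → ℝ}
    (h : IsRitzSystem Q e μ) (i : Fin n) : minMaxValue Q (i + 1) ≤ μ i :=
  SpectralMin.minMaxValue_le hQ (h.comp (Fin.castLEOrderEmb i.2)).isMinMaxBound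

lemma exists_isSymmetric_inner_eq (hQ : Q.IsSymm) (W : Submodule ℝ X) [FiniteDimensional ℝ W] :
    ∃ S : W →ₗ[ℝ] W, S.IsSymmetric ∧ ∀ x y : W, ⟪S x, y⟫_ℝ = Q x y := by
  let S : W →ₗ[ℝ] W := (InnerProductSpace.toDual ℝ W).symm.toLinearMap ∘ₗ
    LinearMap.toContinuousLinearMap.toLinearMap ∘ₗ Q.restrict W
  have hS (x y : W) : ⟪S x, y⟫_ℝ = Q x y := by simp [S]
  refine ⟨S, fun x y => ?_, hS⟩
  rw [hS, real_inner_comm, hS]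
  exact hQ.eq _ _

lemma exists_isRitzSystem_span_eq (hQ : Q.IsSymm) (W : Submodule ℝ X) [FiniteDimensional ℝ W] :
    ∃ (e : OrthonormalBasis (Fin (finrank ℝ W)) ℝ W) (μ : Fin (finrank ℝ W) → ℝ),
      IsRitzSystem Q (fun i => (e i : X)) μ := by
  obtain ⟨S, hS, hSQ⟩ := exists_isSymmetric_inner_eq hQ W
  let e := (hS.eigenvectorBasis rfl).reindex Fin.revPerm
  refine ⟨e, hS.eigenvalues rfl ∘ Fin.rev, e.orthonormal.comp_linearIsometry W.subtypeₗᵢ,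
    fun i j => ?_, (hS.eigenvalues_antitone rfl).comp Fin.rev_anti⟩
  rw [← hSQ]
  simp [e, inner_smul_left, orthonormal_iff_ite.1 (hS.eigenvectorBasis rfl).orthonormal]

lemma exists_isMinMaxBound_of_linearIndependent (hQ : Q.IsSymm) {n : ℕ} {w : Fin n → X}
    (hw : LinearIndependent ℝ w) : ∃ c, IsMinMaxBound Q n c := by
  have := FiniteDimensional.span_of_finite ℝ (finite_range w)
  obtain ⟨e, μ, h⟩ := exists_isRitzSystem_span_eq hQ (Submodule.span ℝ (range w))
  have hn : finrank ℝ (Submodule.span ℝ (range w)) = n := by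
    rw [finrank_span_eq_card hw, Fintype.card_fin]
  cases n with
  | zero => exact ⟨0, ⊥, inferInstance, finrank_bot ℝ X, by simp⟩
  | succ n => exact ⟨_, (h.comp (Fin.castOrderIso hn.symm).toOrderEmbedding).isMinMaxBound⟩

lemma sum_apply_self_eq (hQ : Q.IsSymm) {W : Submodule ℝ X} [FiniteDimensional ℝ W]
    {ι κ : Type*} [Fintype ι] [Fintype κ] (b : OrthonormalBasis ι ℝ W)
    (b' : OrthonormalBasis κ ℝ W) : ∑ i, Q (b i) (b i) = ∑ j, Q (b' j) (b' j) := by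
  obtain ⟨S, -, hSQ⟩ := exists_isSymmetric_inner_eq hQ W
  simp only [← hSQ, real_inner_comm _ (S _), ← LinearMap.trace_eq_sum_inner]

-- Ky Fan's trace inequality.
lemma sum_minMaxValue_le (hQ : Q.IsPosSemidef) {n : ℕ} {w : Fin n → X} (hw : Orthonormal ℝ w) :
    ∑ i : Fin n, minMaxValue Q (i + 1) ≤ ∑ i, Q (w i) (w i) := by
  let W := Submodule.span ℝ (range w)
  have hfin : FiniteDimensional ℝ W := FiniteDimensional.span_of_finite ℝ (finite_range w)
  let b : Module.Basis (Fin n) ℝ W := Module.Basis.span hw.linearIndependent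
  have hb (i : Fin n) : (b i : X) = w i :=
    congrArg Subtype.val (Module.Basis.span_apply hw.linearIndependent i)
  let w' : OrthonormalBasis (Fin n) ℝ W := b.toOrthonormalBasis (by
    rw [← W.subtypeₗᵢ.orthonormal_comp_iff]
    simpa [Function.comp_def, hb] using hw)
  have hn : finrank ℝ W = n := by simp [W, finrank_span_eq_card hw.linearIndependent]
  obtain ⟨e, μ, he⟩ := exists_isRitzSystem_span_eq hQ.isSymm W
  calc ∑ i : Fin n, minMaxValue Q (i + 1)
      = ∑ i : Fin (finrank ℝ W), minMaxValue Q (i + 1) := by rw [hn]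
    _ ≤ ∑ i, μ i := Finset.sum_le_sum fun i _ => he.minMaxValue_le hQ.isNonneg i
    _ = ∑ i, Q (e i) (e i) := by simp [he.diag]
    _ = ∑ i, Q (w' i) (w' i) := sum_apply_self_eq hQ.isSymm e w'
    _ = ∑ i, Q (w i) (w i) := by simp [w', hb]

lemma exists_ne_zero_forall_inner_eq_zero {V : Submodule ℝ X} [FiniteDimensional ℝ V] {n : ℕ}
    (hV : n < finrank ℝ V) (e : Fin n → X) : ∃ x ∈ V, x ≠ 0 ∧ ∀ l, ⟪e l, x⟫_ℝ = 0 := by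
  let L : V →ₗ[ℝ] (Fin n → ℝ) := LinearMap.pi fun l => (innerₛₗ ℝ (e l)).domRestrict V
  obtain ⟨x, hx, hx0⟩ := Submodule.exists_mem_ne_zero_of_ne_bot
    (LinearMap.ker_ne_bot_of_finrank_lt (f := L) (by simpa using hV))
  exact ⟨x, x.2, by simpa using hx0, fun l => congrFun (LinearMap.mem_ker.1 hx) l⟩

lemma IsRitzSystem.le_of_forall_mem_le {W V : Submodule ℝ X} [FiniteDimensional ℝ W]
    {e : OrthonormalBasis (Fin (finrank ℝ W)) ℝ W} {μ : Fin (finrank ℝ W) → ℝ}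
    (h : IsRitzSystem Q (fun i => (e i : X)) μ) (hVW : V ≤ W) {c : ℝ}
    (hc : ∀ x ∈ V, Q x x ≤ c * ‖x‖ ^ 2) {i : Fin (finrank ℝ W)} (hi : i < finrank ℝ V) :
    μ i ≤ c := by
  have : FiniteDimensional ℝ V := Submodule.finiteDimensional_of_le hVW
  obtain ⟨x, hxV, hx0, hx⟩ :=
    exists_ne_zero_forall_inner_eq_zero hi fun l : Fin i => (e (Fin.castLE i.2.le l) : X)
  have hsum : x = ∑ j, ⟪(e j : X), x⟫_ℝ • (e j : X) := by
    have := congrArg Subtype.val (e.sum_repr' ⟨x, hVW hxV⟩)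
    simpa using this.symm
  have hle : μ i * ‖x‖ ^ 2 ≤ Q x x := by
    rw [hsum, h.apply_sum_self, norm_sq_sum_smul_of_orthonormal h.orthonormal, Finset.mul_sum]
    refine Finset.sum_le_sum fun j _ => ?_
    rcases lt_or_ge j i with hji | hij
    · have : ⟪(e j : X), x⟫_ℝ = 0 := hx ⟨j, hji⟩
      simp [this]
    · have := h.monotone hij
      gcongr
  exact le_of_mul_le_mul_right (hle.trans (hc x hxV)) (by positivity)

/-- Approximate eigenvectors `u` with approximate eigenvalues `μ` for the first `n` min-max values
of `Q`. The defect `η` enters both in the size of `μ` and in the weak eigenvalue equation; exact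
eigenvectors need not exist, since `X` is not assumed complete. -/
structure IsApproxEigensystem (Q : BilinForm ℝ X) (η : ℝ) {n : ℕ} (u : Fin n → X)
    (μ : Fin n → ℝ) : Prop extends IsRitzSystem Q u μ where
  le_add : ∀ i : Fin n, μ i ≤ minMaxValue Q (i + 1) + η
  weak : ∀ v j, (Q (u j) v - μ j * ⟪u j, v⟫_ℝ) ^ 2 ≤ η * (Q v v + ‖v‖ ^ 2)

lemma IsRitzSystem.nonneg (hQ : Q.IsNonneg) {n : ℕ} {e : Fin n → X} {μ : Fin n → ℝ}
    (h : IsRitzSystem Q e μ) (i : Fin n) : 0 ≤ μ i := by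
  simpa [h.diag] using hQ.nonneg (e i)

lemma orthonormal_update_smul {n : ℕ} {u : Fin n → X} (hu : Orthonormal ℝ u) {j : Fin n} {x : X}
    (hx : x ≠ 0) (hxu : ∀ l ≠ j, ⟪u l, x⟫_ℝ = 0) :
    Orthonormal ℝ (Function.update u j (‖x‖⁻¹ • x)) := by
  refine ⟨fun l => ?_, fun l m hlm => ?_⟩
  · rcases eq_or_ne l j with rfl | hl
    · simp [norm_smul, hx]
    · simp [hl, hu.1 l]
  · rcases eq_or_ne l j with rfl | hl
    · simp [hlm.symm, real_inner_comm (u m), inner_smul_right, hxu m hlm.symm]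
    · rcases eq_or_ne m j with rfl | hm
      · simp [hl, inner_smul_right, hxu l hl]
      · simp [hl, hm, hu.2 hlm]

section Perturbation

variable {n : ℕ} {u : Fin n → X} {μ : Fin n → ℝ} {δ : ℝ}

-- Replacing `u j` by `x` keeps the trace above `∑ i, minMaxValue Q (i + 1)`.
lemma IsRitzSystem.sub_mul_norm_sq_le (hQ : Q.IsPosSemidef) (h : IsRitzSystem Q u μ)
    (hμ : ∑ i, μ i ≤ ∑ i : Fin n, minMaxValue Q (i + 1) + δ) {j : Fin n} {x : X}
    (hx : x ≠ 0) (hxu : ∀ l ≠ j, ⟪u l, x⟫_ℝ = 0) : (μ j - δ) * ‖x‖ ^ 2 ≤ Q x x := by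
  have htrace := sum_minMaxValue_le hQ (orthonormal_update_smul h.orthonormal hx hxu)
  rw [← Finset.add_sum_erase _ (fun l => Q (Function.update u j (‖x‖⁻¹ • x) l) _)
    (Finset.mem_univ j)] at htrace
  rw [← Finset.add_sum_erase _ μ (Finset.mem_univ j)] at hμ
  have hrest : ∑ l ∈ Finset.univ.erase j, Q (Function.update u j (‖x‖⁻¹ • x) l)
      (Function.update u j (‖x‖⁻¹ • x) l) = ∑ l ∈ Finset.univ.erase j, μ l :=
    Finset.sum_congr rfl fun l hl => by simp [Finset.ne_of_mem_erase hl, h.diag]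
  have hle : μ j - δ ≤ Q x x / ‖x‖ ^ 2 := by
    have hxx : Q (‖x‖⁻¹ • x) (‖x‖⁻¹ • x) = Q x x / ‖x‖ ^ 2 := by
      simp only [map_smul, LinearMap.smul_apply, smul_eq_mul]
      ring
    rw [hrest, Function.update_self, hxx] at htrace
    linarith
  rwa [le_div_iff₀ (by positivity)] at hle

lemma IsRitzSystem.sq_apply_le_of_orthogonal (hQ : Q.IsPosSemidef) (h : IsRitzSystem Q u μ)
    (hμ : ∑ i, μ i ≤ ∑ i : Fin n, minMaxValue Q (i + 1) + δ) (j : Fin n) {z : X}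
    (hz : ∀ l, ⟪u l, z⟫_ℝ = 0) : Q (u j) z ^ 2 ≤ δ * (Q z z + δ * ‖z‖ ^ 2) := by
  have hquad (t : ℝ) : 0 ≤ (Q z z + δ * ‖z‖ ^ 2) * (t * t) + 2 * Q (u j) z * t + δ := by
    have hnorm : ‖u j + t • z‖ ^ 2 = 1 + t ^ 2 * ‖z‖ ^ 2 := by
      rw [norm_add_sq_real, h.orthonormal.1, inner_smul_right, hz, norm_smul, mul_pow,
        Real.norm_eq_abs, sq_abs]
      ring
    have hne : u j + t • z ≠ 0 := by
      rw [← norm_ne_zero_iff, ← pow_ne_zero_iff two_ne_zero, hnorm]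
      positivity
    have hle := h.sub_mul_norm_sq_le hQ hμ (j := j) hne fun l hl => by
      simp [inner_add_right, inner_smul_right, hz, h.orthonormal.2 hl]
    have hexpand : Q (u j + t • z) (u j + t • z) = μ j + 2 * t * Q (u j) z + t ^ 2 * Q z z := by
      simp only [map_add, map_smul, LinearMap.add_apply, LinearMap.smul_apply, smul_eq_mul, h.diag,
        hQ.isSymm.eq z (u j), if_true]
      ring
    rw [hnorm, hexpand] at hle
    nlinarith [mul_nonneg (h.nonneg hQ.isNonneg j) (mul_nonneg (sq_nonneg t) (sq_nonneg ‖z‖))]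
  have hdiscrim := discrim_le_zero hquad
  rw [discrim] at hdiscrim
  linarith

lemma IsRitzSystem.sq_weak_le (hQ : Q.IsPosSemidef) (h : IsRitzSystem Q u μ) (hδ : 0 ≤ δ)
    (hμ : ∑ i, μ i ≤ ∑ i : Fin n, minMaxValue Q (i + 1) + δ) {M : ℝ} (hM : 0 ≤ M)
    (hμM : ∀ i, μ i ≤ M) (v : X) (j : Fin n) :
    (Q (u j) v - μ j * ⟪u j, v⟫_ℝ) ^ 2 ≤ δ * (2 * Q v v + (2 * M + δ) * ‖v‖ ^ 2) := by
  set p := ∑ l, ⟪u l, v⟫_ℝ • u l with hp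
  set z := v - p with hz
  have hup (l : Fin n) : ⟪u l, p⟫_ℝ = ⟪u l, v⟫_ℝ := h.orthonormal.inner_right_fintype _ l
  have huz (l : Fin n) : ⟪u l, z⟫_ℝ = 0 := by rw [hz, inner_sub_right, hup, sub_self]
  have hQuz : Q (u j) v - μ j * ⟪u j, v⟫_ℝ = Q (u j) z := by
    simp [hz, hp, h.diag, mul_comm]
  have hpz : ⟪p, z⟫_ℝ = 0 := by simp [hp, sum_inner, inner_smul_left, huz]
  have hpythagoras : ‖v‖ ^ 2 = ‖p‖ ^ 2 + ‖z‖ ^ 2 := by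
    rw [← add_sub_cancel p v, ← hz, norm_add_sq_real, hpz]
    ring
  have hQp : Q p p ≤ M * ‖p‖ ^ 2 := by
    rw [hp, h.apply_sum_self, norm_sq_sum_smul_of_orthonormal h.orthonormal, Finset.mul_sum]
    gcongr with i
    exact hμM i
  have hQz : Q z z ≤ 2 * Q v v + 2 * Q p p := by
    have := hQ.isNonneg.nonneg (v + p)
    simp only [hz, map_sub, map_add, LinearMap.sub_apply, LinearMap.add_apply] at this ⊢
    linarith
  rw [hQuz]
  refine (h.sq_apply_le_of_orthogonal hQ hμ j huz).trans ?_
  refine mul_le_mul_of_nonneg_left ?_ hδ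
  nlinarith [mul_le_mul_of_nonneg_left (show ‖p‖ ^ 2 ≤ ‖v‖ ^ 2 by linarith [sq_nonneg ‖z‖]) hM,
    mul_le_mul_of_nonneg_left (show ‖z‖ ^ 2 ≤ ‖v‖ ^ 2 by linarith [sq_nonneg ‖p‖]) hδ]

end Perturbation

lemma exists_isRitzSystem_le_add (hQ : Q.IsPosSemidef) {n : ℕ} (h : ∃ c, IsMinMaxBound Q n c)
    {ε : ℝ} (hε : 0 < ε) : ∃ (u : Fin n → X) (μ : Fin n → ℝ), IsRitzSystem Q u μ ∧
      ∀ i : Fin n, μ i ≤ minMaxValue Q (i + 1) + ε := by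
  obtain ⟨c, hc⟩ := h
  choose V hVfin hVrank hV using fun i : Fin n =>
    isMinMaxBound_minMaxValue_add ⟨c, hc.of_le (m := i + 1) i.2⟩ hε
  obtain ⟨e, μ, he⟩ := exists_isRitzSystem_span_eq hQ.isSymm (⨆ i, V i)
  have hn : n ≤ finrank ℝ (⨆ i, V i : Submodule ℝ X) := by
    rcases n with _ | m
    · exact Nat.zero_le _
    · exact (hVrank (Fin.last m)).symm.le.trans (Submodule.finrank_mono (le_iSup V _))
  exact ⟨_, _, he.comp (Fin.castLEOrderEmb hn), fun i => he.le_of_forall_mem_le (le_iSup V i)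
    (hV i) (by simp [hVrank])⟩

theorem exists_isApproxEigensystem (hQ : Q.IsPosSemidef) {n : ℕ} (h : ∃ c, IsMinMaxBound Q n c)
    {η : ℝ} (hη : 0 < η) :
    ∃ (u : Fin n → X) (μ : Fin n → ℝ), IsApproxEigensystem Q η u μ := by
  set M := |minMaxValue Q n| + 1
  obtain ⟨ε, hε, hεη, hε1, hn2, hnM⟩ : ∃ ε : ℝ, 0 < ε ∧ ε ≤ η ∧ ε ≤ 1 ∧
      n * ε * 2 ≤ η ∧ n * ε * (2 * M + n * ε) ≤ η := by
    have hsmall (f : ℝ → ℝ) (hf : Continuous f) (h0 : f 0 = 0) {b : ℝ} (hb : 0 < b) :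
        ∀ᶠ ε in nhdsWithin (0 : ℝ) (Ioi 0), f ε ≤ b :=
      (hf.continuousWithinAt.eventually_lt_const (by rwa [h0])).mono fun _ => le_of_lt
    exact ((hsmall _ continuous_id rfl hη).and <| (hsmall _ continuous_id rfl one_pos).and <|
      (hsmall (fun ε => n * ε * 2) (by fun_prop) (by simp) hη).and
      (hsmall (fun ε => n * ε * (2 * M + n * ε)) (by fun_prop) (by simp) hη)).and
      self_mem_nhdsWithin |>.exists.imp fun ε hε => by tauto
  obtain ⟨u, μ, hu, hμ⟩ := exists_isRitzSystem_le_add hQ h hε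
  have hsum : ∑ i, μ i ≤ ∑ i : Fin n, minMaxValue Q (i + 1) + n * ε := by
    simpa [Finset.sum_add_distrib] using Finset.sum_le_sum fun i (_ : i ∈ Finset.univ) => hμ i
  have hμM (i : Fin n) : μ i ≤ M := by
    linarith [hμ i, minMaxValue_mono hQ.isNonneg i.2 h, le_abs_self (minMaxValue Q n)]
  refine ⟨u, μ, hu, fun i => (hμ i).trans (by gcongr), fun v j => ?_⟩
  calc (Q (u j) v - μ j * ⟪u j, v⟫_ℝ) ^ 2
      ≤ n * ε * (2 * Q v v + (2 * M + n * ε) * ‖v‖ ^ 2) :=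
        hu.sq_weak_le hQ (by positivity) hsum (by positivity) hμM v j
    _ = (n * ε * 2) * Q v v + (n * ε * (2 * M + n * ε)) * ‖v‖ ^ 2 := by ring
    _ ≤ η * Q v v + η * ‖v‖ ^ 2 := by
        have := hQ.isNonneg.nonneg v
        gcongr
    _ = η * (Q v v + ‖v‖ ^ 2) := by ring

end MinMax

/-! ### Gradients -/

section Gradient

open scoped InnerProductSpace Gradient

variable {E : Type*} [NormedAddCommGroup E] [InnerProductSpace ℝ E] [CompleteSpace E]
  {f u v : E → ℝ} {z : E}

lemma norm_gradient (u : E → ℝ) (z : E) : ‖∇ u z‖ = ‖fderiv ℝ u z‖ :=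
  LinearIsometryEquiv.norm_map _ _

lemma gradient_fun_add (hu : DifferentiableAt ℝ u z) (hv : DifferentiableAt ℝ v z) :
    ∇ (fun x => u x + v x) z = ∇ u z + ∇ v z := by
  simp only [gradient, fderiv_fun_add hu hv, map_add]

lemma gradient_fun_const_mul (hu : DifferentiableAt ℝ u z) (c : ℝ) :
    ∇ (fun x => c * u x) z = c • ∇ u z := by
  simp only [gradient, fderiv_const_mul hu, map_smulₛₗ, conj_trivial]

lemma gradient_fun_mul (hf : DifferentiableAt ℝ f z) (hu : DifferentiableAt ℝ u z) :
    ∇ (fun x => f x * u x) z = f z • ∇ u z + u z • ∇ f z := by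
  simp only [gradient, fderiv_fun_mul hf hu, map_add, map_smulₛₗ, conj_trivial]

lemma gradient_eq_zero_of_notMem_tsupport (hz : z ∉ tsupport u) : ∇ u z = 0 := by
  rw [(notMem_tsupport_iff_eventuallyEq.1 hz).gradient_eq]
  exact gradient_fun_const z 0

lemma continuous_gradient {n : WithTop ℕ∞} (hu : ContDiff ℝ n u) (hn : n ≠ 0) :
    Continuous (∇ u) :=
  (LinearIsometryEquiv.continuous _).comp (hu.continuous_fderiv hn)

lemma norm_gradient_mul_sq_le (hf : DifferentiableAt ℝ f z) (hu : DifferentiableAt ℝ u z) :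
    ‖∇ (fun x => f x * u x) z‖ ^ 2 ≤
      2 * f z ^ 2 * ‖∇ u z‖ ^ 2 + 2 * u z ^ 2 * ‖∇ f z‖ ^ 2 := by
  have hsq : 0 ≤ ‖f z • ∇ u z - u z • ∇ f z‖ ^ 2 := sq_nonneg _
  rw [norm_sub_sq_real] at hsq
  rw [gradient_fun_mul hf hu, norm_add_sq_real]
  simp only [norm_smul, mul_pow, Real.norm_eq_abs, sq_abs] at hsq ⊢
  linarith

lemma sq_mul_norm_gradient_sq_le (hf : DifferentiableAt ℝ f z) (hu : DifferentiableAt ℝ u z) :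
    f z ^ 2 * ‖∇ u z‖ ^ 2 ≤
      2 * ⟪∇ u z, ∇ (fun x => f x * (f x * u x)) z⟫_ℝ + 4 * u z ^ 2 * ‖∇ f z‖ ^ 2 := by
  have hsq : 0 ≤ ‖f z • ∇ u z + (2 * u z) • ∇ f z‖ ^ 2 := sq_nonneg _
  rw [norm_add_sq_real, norm_smul, norm_smul, real_inner_smul_left, real_inner_smul_right,
    mul_pow, mul_pow, Real.norm_eq_abs, Real.norm_eq_abs, sq_abs, sq_abs] at hsq
  rw [gradient_fun_mul hf (hf.fun_mul hu), gradient_fun_mul hf hu]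
  simp only [inner_add_right, real_inner_smul_right, real_inner_self_eq_norm_sq]
  linarith

lemma gradSqE_eq_norm_gradient_sq (u : EucN N → ℝ) (z : EucN N) : gradSqE u z = ‖∇ u z‖ ^ 2 := by
  rw [← (EuclideanSpace.basisFun (Fin N) ℝ).sum_sq_inner_left (∇ u z)]
  simp only [gradSqE, inner_gradient_left, EuclideanSpace.basisFun_apply]

end Gradient

/-! ### The space of test functions and its Dirichlet form -/

section TestSpace

open scoped InnerProductSpace Gradient ContDiff
open Module (finrank)
open LinearMap (BilinForm)

variable {Ω Ω' : Set (EucN N)}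

/-- The space `C_c^∞(Ω)` as a subspace of all functions. -/
def testSubmodule (Ω : Set (EucN N)) : Submodule ℝ (EucN N → ℝ) where
  carrier := {u | IsTestE Ω u}
  add_mem' hu hv := ⟨hu.1.add hv.1, hu.2.1.add hv.2.1,
    (tsupport_add _ _).trans (union_subset hu.2.2 hv.2.2)⟩
  zero_mem' := ⟨contDiff_const, HasCompactSupport.zero, by simp [tsupport]⟩
  smul_mem' c u hu := ⟨hu.1.const_smul c, hu.2.1.smul_left,
    (tsupport_smul_subset_right (fun _ => c) u).trans hu.2.2⟩

/-- The space `C_c^∞(Ω)` with its `L²` inner product. It is a new type because `testSubmodule Ω`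
already carries the topology of pointwise convergence. -/
def TestSpace (Ω : Set (EucN N)) : Type := testSubmodule Ω

namespace TestSpace

instance : AddCommGroup (TestSpace Ω) := inferInstanceAs (AddCommGroup (testSubmodule Ω))

instance : Module ℝ (TestSpace Ω) := inferInstanceAs (Module ℝ (testSubmodule Ω))

instance : FunLike (TestSpace Ω) (EucN N) ℝ where
  coe u := u.1
  coe_injective := Subtype.val_injective

lemma isTest (u : TestSpace Ω) : IsTestE Ω u := u.2

@[ext] lemma ext {u v : TestSpace Ω} (h : ∀ z, u z = v z) : u = v := DFunLike.ext u v h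

lemma add_apply (u v : TestSpace Ω) (z : EucN N) : (u + v) z = u z + v z := rfl

lemma smul_apply (c : ℝ) (u : TestSpace Ω) (z : EucN N) : (c • u) z = c * u z := rfl

/-- Evaluation of test functions on all of `ℝ^N`, as a linear map. -/
def coeFnₗ (Ω : Set (EucN N)) : TestSpace Ω →ₗ[ℝ] EucN N → ℝ := (testSubmodule Ω).subtype

lemma coeFnₗ_apply (u : TestSpace Ω) : coeFnₗ Ω u = u := rfl

lemma coeFnₗ_injective : Function.Injective (coeFnₗ Ω) := (testSubmodule Ω).injective_subtype

lemma sum_smul_apply {ι : Type*} [Fintype ι] (β : ι → ℝ) (u : ι → TestSpace Ω) (z : EucN N) :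
    (∑ i, β i • u i) z = ∑ i, β i * u i z := by
  rw [← coeFnₗ_apply, map_sum, Finset.sum_apply]
  rfl

lemma contDiff (u : TestSpace Ω) : ContDiff ℝ ∞ u := u.2.1

lemma differentiable (u : TestSpace Ω) : Differentiable ℝ u := u.contDiff.differentiable (by simp)

lemma continuous (u : TestSpace Ω) : Continuous u := u.contDiff.continuous

lemma continuous_gradient (u : TestSpace Ω) : Continuous (∇ u) :=
  SpectralMin.continuous_gradient u.contDiff (by simp)

lemma hasCompactSupport (u : TestSpace Ω) : HasCompactSupport u := u.2.2.1

lemma tsupport_subset (u : TestSpace Ω) : tsupport u ⊆ Ω := u.2.2.2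

lemma integrable_mul (u : TestSpace Ω) {f : EucN N → ℝ} (hf : Continuous f) :
    Integrable fun z => u z * f z :=
  (u.continuous.mul hf).integrable_of_hasCompactSupport u.hasCompactSupport.mul_right

lemma integrable_sq (u : TestSpace Ω) : Integrable fun z => u z ^ 2 := by
  simpa only [sq] using u.integrable_mul u.continuous

lemma integrable_inner_gradient (u : TestSpace Ω) {F : EucN N → EucN N} (hF : Continuous F) :
    Integrable fun z => ⟪∇ u z, F z⟫_ℝ :=
  (u.continuous_gradient.inner hF).integrable_of_hasCompactSupport <|
    u.hasCompactSupport.mono' fun z hz => by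
      contrapose! hz
      rw [Function.notMem_support, gradient_eq_zero_of_notMem_tsupport hz, inner_zero_left]

lemma integrable_norm_gradient_sq (u : TestSpace Ω) : Integrable fun z => ‖∇ u z‖ ^ 2 := by
  simpa only [real_inner_self_eq_norm_sq] using u.integrable_inner_gradient u.continuous_gradient

lemma integrable_sq_mul (u : TestSpace Ω) {f : EucN N → ℝ} (hf : Continuous f) :
    Integrable fun z => u z ^ 2 * f z := by
  simpa only [sq, mul_assoc] using u.integrable_mul (u.continuous.fun_mul hf)

lemma integrable_norm_gradient_sq_mul (u : TestSpace Ω) {f : EucN N → ℝ} (hf : Continuous f) :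
    Integrable fun z => ‖∇ u z‖ ^ 2 * f z := by
  simpa only [real_inner_smul_right, real_inner_self_eq_norm_sq, mul_comm] using
    u.integrable_inner_gradient (hf.fun_smul u.continuous_gradient)

lemma gradient_add (u v : TestSpace Ω) (z : EucN N) : ∇ (u + v) z = ∇ u z + ∇ v z :=
  gradient_fun_add (u.differentiable z) (v.differentiable z)

lemma gradient_smul (c : ℝ) (u : TestSpace Ω) (z : EucN N) : ∇ (c • u) z = c • ∇ u z :=
  gradient_fun_const_mul (u.differentiable z) c

lemma eq_zero_of_integral_sq_eq_zero (u : TestSpace Ω) (h : ∫ z, u z ^ 2 = 0) : u = 0 := by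
  by_contra hu
  obtain ⟨z, hz⟩ : ∃ z, u z ≠ 0 := by
    by_contra! hzero
    exact hu (TestSpace.ext hzero)
  refine ((u.continuous.pow 2).integral_pos_of_hasCompactSupport_nonneg_nonzero ?_
    (fun z => sq_nonneg (u z)) (pow_ne_zero 2 hz)).ne' h
  simpa only [sq] using u.hasCompactSupport.mul_right

/-- The `L²` inner product on test functions. -/
abbrev innerCore (Ω : Set (EucN N)) : InnerProductSpace.Core ℝ (TestSpace Ω) where
  inner u v := ∫ z, u z * v z
  conj_inner_symm u v := by simp only [conj_trivial, mul_comm]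
  re_inner_nonneg u := integral_nonneg fun z => mul_self_nonneg _
  add_left u v w := by
    simp only [add_apply, add_mul]
    exact integral_add (u.integrable_mul w.continuous) (v.integrable_mul w.continuous)
  smul_left u v c := by
    simp only [smul_apply, mul_assoc, integral_const_mul, conj_trivial]
  definite u h := u.eq_zero_of_integral_sq_eq_zero (by simpa only [sq] using h)

instance : NormedAddCommGroup (TestSpace Ω) := (innerCore Ω).toNormedAddCommGroup

instance : InnerProductSpace ℝ (TestSpace Ω) := InnerProductSpace.ofCore (innerCore Ω).toCore

lemma inner_eq (u v : TestSpace Ω) : ⟪u, v⟫_ℝ = ∫ z, u z * v z := rfl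

lemma norm_sq_eq (u : TestSpace Ω) : ‖u‖ ^ 2 = ∫ z, u z ^ 2 := by
  rw [← real_inner_self_eq_norm_sq, inner_eq]
  simp only [sq]

/-- Multiplication by a smooth function, as a linear map between spaces of test functions. -/
def mulLeft (f : EucN N → ℝ) (hf : ContDiff ℝ ∞ f) (h : Ω ∩ tsupport f ⊆ Ω') :
    TestSpace Ω →ₗ[ℝ] TestSpace Ω' where
  toFun u := ⟨fun z => f z * u z, hf.mul u.contDiff, u.hasCompactSupport.mul_left, fun _ hz =>
    h ⟨u.tsupport_subset (tsupport_mul_subset_right hz), tsupport_mul_subset_left hz⟩⟩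
  map_add' _ _ := TestSpace.ext fun _ => mul_add _ _ _
  map_smul' _ _ := TestSpace.ext fun _ => mul_left_comm _ _ _

lemma mulLeft_apply {f : EucN N → ℝ} (hf : ContDiff ℝ ∞ f) (h : Ω ∩ tsupport f ⊆ Ω')
    (u : TestSpace Ω) (z : EucN N) : mulLeft f hf h u z = f z * u z := rfl

end TestSpace

/-- The Dirichlet form `(u, v) ↦ ∫ ⟪∇u, ∇v⟫` on test functions. -/
def dirichletForm (Ω : Set (EucN N)) : BilinForm ℝ (TestSpace Ω) :=
  LinearMap.mk₂ ℝ (fun u v => ∫ z, ⟪∇ u z, ∇ v z⟫_ℝ)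
    (fun u v w => by
      simp only [TestSpace.gradient_add, inner_add_left]
      exact integral_add (u.integrable_inner_gradient w.continuous_gradient)
        (v.integrable_inner_gradient w.continuous_gradient))
    (fun c u v => by
      simp only [TestSpace.gradient_smul, real_inner_smul_left, integral_const_mul, smul_eq_mul])
    (fun u v w => by
      simp only [TestSpace.gradient_add, inner_add_right]
      exact integral_add (u.integrable_inner_gradient v.continuous_gradient)
        (u.integrable_inner_gradient w.continuous_gradient))
    (fun c u v => by
      simp only [TestSpace.gradient_smul, real_inner_smul_right, integral_const_mul, smul_eq_mul])

lemma dirichletForm_apply (u v : TestSpace Ω) :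
    dirichletForm Ω u v = ∫ z, ⟪∇ u z, ∇ v z⟫_ℝ := rfl

lemma dirichletForm_self (u : TestSpace Ω) : dirichletForm Ω u u = ∫ z, ‖∇ u z‖ ^ 2 := by
  simp only [dirichletForm_apply, real_inner_self_eq_norm_sq]

lemma dirichletForm_isPosSemidef : (dirichletForm Ω).IsPosSemidef where
  eq u v := by simp only [dirichletForm_apply, real_inner_comm]
  nonneg u := by
    rw [dirichletForm_self]
    positivity

lemma dirichletForm_mulLeft_self_le {f : EucN N → ℝ} (hf : ContDiff ℝ ∞ f)
    (h : Ω ∩ tsupport f ⊆ Ω') (u : TestSpace Ω) :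
    dirichletForm Ω' (TestSpace.mulLeft f hf h u) (TestSpace.mulLeft f hf h u) ≤
      2 * (∫ z, ‖∇ u z‖ ^ 2 * f z ^ 2) + 2 * ∫ z, u z ^ 2 * ‖∇ f z‖ ^ 2 := by
  have hint := (u.integrable_norm_gradient_sq_mul (hf.continuous.fun_pow 2)).const_mul 2
  have hint' := (u.integrable_sq_mul
    ((continuous_gradient hf (by simp)).norm.fun_pow 2)).const_mul 2
  rw [dirichletForm_self, ← integral_const_mul, ← integral_const_mul, ← integral_add hint hint']
  refine integral_mono (TestSpace.integrable_norm_gradient_sq _) (hint.add hint') fun z => ?_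
  have hz := norm_gradient_mul_sq_le (hf.differentiable (by simp) z) (u.differentiable z)
  change ‖∇ (fun x => f x * u x) z‖ ^ 2 ≤
    2 * (‖∇ u z‖ ^ 2 * f z ^ 2) + 2 * (u z ^ 2 * ‖∇ f z‖ ^ 2)
  linarith

lemma rayleighE_univ_le_iff {u : TestSpace Ω} (hu : u ≠ 0) (c : ℝ) :
    rayleighE univ u ≤ c ↔ dirichletForm Ω u u ≤ c * ‖u‖ ^ 2 := by
  have hpos : 0 < ‖u‖ ^ 2 := by positivity
  rw [u.norm_sq_eq] at hpos ⊢
  simp only [rayleighE, Measure.restrict_univ, div_le_iff₀ hpos, gradSqE_eq_norm_gradient_sq,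
    dirichletForm_self]

lemma isMinMaxBound_dirichletForm_iff {k : ℕ} {c : ℝ} :
    IsMinMaxBound (dirichletForm Ω) k c ↔
      ∃ u : Fin k → EucN N → ℝ, (∀ i, IsTestE Ω (u i)) ∧ LinearIndependent ℝ u ∧
        ∀ β : Fin k → ℝ, β ≠ 0 → rayleighE univ (fun z => ∑ i, β i * u i z) ≤ c := by
  constructor
  · rintro ⟨V, _, hV, hle⟩
    let b := Module.finBasisOfFinrankEq ℝ V hV
    have hli : LinearIndependent ℝ fun i => (b i : TestSpace Ω) :=
      b.linearIndependent.map' V.subtype V.ker_subtype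
    refine ⟨fun i => (b i : TestSpace Ω), fun i => (b i : TestSpace Ω).isTest,
      hli.map' (TestSpace.coeFnₗ Ω) (LinearMap.ker_eq_bot.2 TestSpace.coeFnₗ_injective),
      fun β hβ => ?_⟩
    have hne : ∑ i, β i • (b i : TestSpace Ω) ≠ 0 := fun h =>
      hβ (funext (Fintype.linearIndependent_iff.1 hli β h))
    have hmem : ∑ i, β i • (b i : TestSpace Ω) ∈ V :=
      V.sum_mem fun i _ => V.smul_mem _ (b i).2
    rw [show (fun z => ∑ i, β i * (b i : TestSpace Ω) z) = ∑ i, β i • (b i : TestSpace Ω) from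
      funext fun z => (TestSpace.sum_smul_apply β _ z).symm]
    exact (rayleighE_univ_le_iff hne c).2 (hle _ hmem)
  · rintro ⟨u, hu, hli, hle⟩
    let v : Fin k → TestSpace Ω := fun i => ⟨u i, hu i⟩
    have hv : LinearIndependent ℝ v := LinearIndependent.of_comp (TestSpace.coeFnₗ Ω) hli
    refine ⟨Submodule.span ℝ (range v), FiniteDimensional.span_of_finite ℝ (finite_range v),
      by rw [finrank_span_eq_card hv, Fintype.card_fin], fun x hx => ?_⟩
    obtain ⟨β, rfl⟩ := (Submodule.mem_span_range_iff_exists_fun ℝ).1 hx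
    rcases eq_or_ne (∑ i, β i • v i) 0 with h0 | hne
    · simp only [h0, map_zero, norm_zero, zero_pow two_ne_zero, mul_zero, le_refl]
    · have hβ : β ≠ 0 := by
        rintro rfl
        simp only [Pi.zero_apply, zero_smul, Finset.sum_const_zero, ne_eq, not_true] at hne
      refine (rayleighE_univ_le_iff hne c).1 (le_of_eq_of_le ?_ (hle β hβ))
      exact congrArg _ (funext fun z => TestSpace.sum_smul_apply β v z)

theorem eigenvalE_eq_minMaxValue (Ω : Set (EucN N)) (k : ℕ) :
    eigenvalE Ω k = minMaxValue (dirichletForm Ω) k :=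
  congrArg sInf (ext fun _ => isMinMaxBound_dirichletForm_iff.symm)

end TestSpace

/-! ### Faber–Krahn inequalities -/

section FaberKrahn

open scoped Gradient ContDiff Convolution
open Module (finrank)
open Function (support)

section Sobolev

variable {E F : Type*} [MeasurableSpace E] {μ : Measure E} [NormedAddCommGroup F]

lemma eLpNorm_one_le_eLpNorm_conjExponent_mul {f : E → F} {n : ℕ} (hn : 2 ≤ n)
    (hf : AEStronglyMeasurable f μ) {s : Set E} (hs : support f ⊆ s) :
    eLpNorm f 1 μ ≤ eLpNorm f (NNReal.conjExponent n) μ * μ s ^ ((n : ℝ)⁻¹) := by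
  have hconj : NNReal.HolderConjugate n (NNReal.conjExponent n) :=
    NNReal.HolderConjugate.conjExponent (by exact_mod_cast hn)
  have hle := eLpNorm_le_eLpNorm_mul_rpow_measure_univ (μ := μ.restrict s)
    (p := 1) (q := NNReal.conjExponent n) (by exact_mod_cast hconj.symm.lt.le) hf.restrict
  rw [eLpNorm_restrict_eq_of_support_subset hs, eLpNorm_restrict_eq_of_support_subset hs,
    Measure.restrict_apply_univ] at hle
  have hexp : 1 / ENNReal.toReal 1 - 1 / (NNReal.conjExponent n : ℝ≥0∞).toReal = (n : ℝ)⁻¹ := by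
    have hsum := hconj.coe.inv_add_inv_eq_one
    simp only [NNReal.coe_natCast] at hsum
    rw [ENNReal.toReal_one, ENNReal.coe_toReal]
    linarith [one_div (NNReal.conjExponent n : ℝ)]
  rwa [hexp] at hle

variable [NormedAddCommGroup E] [NormedSpace ℝ E] [BorelSpace E] [FiniteDimensional ℝ E]
  [NormedSpace ℝ F] [FiniteDimensional ℝ F] [μ.IsAddHaarMeasure]

lemma integral_norm_le_rpow_mul_integral_norm_fderiv (hE : 2 ≤ finrank ℝ E) {f : E → F}
    (hf : ContDiff ℝ 1 f) (hfc : HasCompactSupport f) {m : ℝ} (hm : 0 ≤ m)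
    (hsupp : μ (support f) ≤ ENNReal.ofReal m) :
    ∫ x, ‖f x‖ ∂μ ≤ eLpNormLESNormFDerivOneConst μ (NNReal.conjExponent (finrank ℝ E)) *
      m ^ ((finrank ℝ E : ℝ)⁻¹) * ∫ x, ‖fderiv ℝ f x‖ ∂μ := by
  have hsob := eLpNorm_le_eLpNorm_fderiv_one μ hf hfc
    (NNReal.HolderConjugate.conjExponent (by exact_mod_cast hE))
  have hint : Integrable f μ := hf.continuous.integrable_of_hasCompactSupport hfc
  have hint' : Integrable (fderiv ℝ f) μ :=
    (hf.continuous_fderiv (by simp)).integrable_of_hasCompactSupport (hfc.fderiv ℝ)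
  have hvol : μ (support f) ^ ((finrank ℝ E : ℝ)⁻¹) ≤
      ENNReal.ofReal (m ^ ((finrank ℝ E : ℝ)⁻¹)) := by
    rw [← ENNReal.ofReal_rpow_of_nonneg hm (by positivity)]
    gcongr
  have hle := (eLpNorm_one_le_eLpNorm_conjExponent_mul hE hf.continuous.aestronglyMeasurable
    subset_rfl).trans (mul_le_mul' hsob hvol)
  rw [eLpNorm_one_eq_lintegral_enorm, eLpNorm_one_eq_lintegral_enorm,
    ← ofReal_integral_norm_eq_lintegral_enorm hint,
    ← ofReal_integral_norm_eq_lintegral_enorm hint', ← ENNReal.ofReal_coe_nnreal,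
    ← ENNReal.ofReal_mul NNReal.zero_le_coe, ← ENNReal.ofReal_mul (by positivity),
    ENNReal.ofReal_le_ofReal_iff (by positivity)] at hle
  linarith

end Sobolev

/-- A constant `C` for which `∫ v² ≤ C |{v ≠ 0}|^{2/N} ∫ |∇v|²`. -/
def faberKrahnConst (N : ℕ) : ℝ :=
  4 * (eLpNormLESNormFDerivOneConst (volume : Measure (EucN N)) (NNReal.conjExponent N) + 1) ^ 2

lemma faberKrahnConst_pos : 0 < faberKrahnConst N := by
  unfold faberKrahnConst
  positivity

variable {Ω : Set (EucN N)}

lemma norm_fderiv_sq (v : TestSpace Ω) (z : EucN N) :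
    ‖fderiv ℝ (fun z => v z ^ 2) z‖ = 2 * |v z| * ‖∇ v z‖ := by
  rw [fderiv_fun_pow 2 (v.differentiable z), norm_smul, norm_gradient]
  simp

theorem integral_sq_le_faberKrahnConst_mul (hN : 2 ≤ N) (v : TestSpace Ω) {m : ℝ} (hm : 0 ≤ m)
    (hsupp : volume (support v) ≤ ENNReal.ofReal m) :
    ∫ z, v z ^ 2 ≤ faberKrahnConst N * m ^ ((2 : ℝ) / N) * ∫ z, ‖∇ v z‖ ^ 2 := by
  set C : NNReal :=
    eLpNormLESNormFDerivOneConst (volume : Measure (EucN N)) (NNReal.conjExponent N) with hC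
  set c : ℝ := C * m ^ ((N : ℝ)⁻¹) with hc
  have hcc : c ^ 2 = C ^ 2 * m ^ ((2 : ℝ) / N) := by
    rw [hc, mul_pow, ← Real.rpow_natCast (m ^ _), ← Real.rpow_mul hm]
    ring_nf
  have hsob : ∫ z, v z ^ 2 ≤ c * ∫ z, 2 * |v z| * ‖∇ v z‖ := by
    have h := integral_norm_le_rpow_mul_integral_norm_fderiv (μ := (volume : Measure (EucN N)))
      (f := fun z => v z ^ 2) (by simpa using hN) ((v.contDiff.pow 2).of_le (by simp))
      (v.hasCompactSupport.comp_left (g := (· ^ 2)) (by simp)) hm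
      (by simpa [support] using hsupp)
    simpa only [norm_fderiv_sq, norm_pow, Real.norm_eq_abs, sq_abs, finrank_euclideanSpace_fin]
      using h
  have hYoung : c * ∫ z, 2 * |v z| * ‖∇ v z‖ ≤
      2⁻¹ * (∫ z, v z ^ 2) + 2 * c ^ 2 * ∫ z, ‖∇ v z‖ ^ 2 := by
    rw [← integral_const_mul, ← integral_const_mul, ← integral_const_mul,
      ← integral_add (v.integrable_sq.const_mul _) (v.integrable_norm_gradient_sq.const_mul _)]
    refine integral_mono_of_nonneg (ae_of_all _ fun z => by positivity)
      ((v.integrable_sq.const_mul _).add (v.integrable_norm_gradient_sq.const_mul _))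
      (ae_of_all _ fun z => ?_)
    change _ ≤ 2⁻¹ * v z ^ 2 + 2 * c ^ 2 * ‖∇ v z‖ ^ 2
    nlinarith [sq_nonneg (|v z| - 2 * c * ‖∇ v z‖), sq_abs (v z)]
  calc ∫ z, v z ^ 2 ≤ 4 * (C : ℝ) ^ 2 * m ^ ((2 : ℝ) / N) * ∫ z, ‖∇ v z‖ ^ 2 := by
        rw [mul_assoc 4, ← hcc]
        linarith
    _ ≤ _ := by
        rw [faberKrahnConst, ← hC]
        gcongr
        exact le_add_of_nonneg_right zero_le_one

/-- A smooth bump supported in the unit ball. -/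
def unitBump (N : ℕ) : TestSpace (univ : Set (EucN N)) :=
  let b : ContDiffBump (0 : EucN N) := ⟨1 / 2, 1, by norm_num, by norm_num⟩
  ⟨b, b.contDiff, b.hasCompactSupport, subset_univ _⟩

lemma support_unitBump : support (unitBump N) = Metric.ball 0 1 :=
  ContDiffBump.support_eq _

lemma norm_unitBump_pos : 0 < ‖unitBump N‖ := by
  refine norm_pos_iff.2 fun h => ?_
  have hmem : (0 : EucN N) ∈ support (unitBump N) := by
    rw [support_unitBump]
    exact Metric.mem_ball_self one_pos
  exact hmem (by rw [h]; rfl)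

/-- The constant in the local Faber–Krahn inequality. -/
def localFaberKrahnConst (N : ℕ) : ℝ :=
  2 * faberKrahnConst N * (‖unitBump N‖ ^ 2 + dirichletForm univ (unitBump N) (unitBump N)) /
    ‖unitBump N‖ ^ 2

lemma localFaberKrahnConst_pos : 0 < localFaberKrahnConst N := by
  have := norm_unitBump_pos (N := N)
  have := faberKrahnConst_pos (N := N)
  have := dirichletForm_isPosSemidef.nonneg (unitBump N)
  unfold localFaberKrahnConst
  positivity

/-- The Faber–Krahn inequality for `v · b(y - ·)`, where `b` is the unit bump. -/
lemma convolution_sq_unitBump_le (hN : 2 ≤ N) (v : TestSpace Ω) {m : ℝ} (hm : 0 ≤ m)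
    {y : EucN N} (hy : volume (support v ∩ Metric.ball y 1) ≤ ENNReal.ofReal m) :
    ((fun z => v z ^ 2) ⋆[.mul ℝ ℝ, volume] fun z => unitBump N z ^ 2) y ≤
      faberKrahnConst N * m ^ ((2 : ℝ) / N) *
        (2 * ((fun z => ‖∇ v z‖ ^ 2) ⋆[.mul ℝ ℝ, volume] fun z => unitBump N z ^ 2) y +
          2 * ((fun z => v z ^ 2) ⋆[.mul ℝ ℝ, volume] fun z => ‖∇ (unitBump N) z‖ ^ 2) y) := by
  set b := unitBump N
  have hb : ContDiff ℝ ∞ fun z => b (y - z) := b.contDiff.comp (contDiff_const.sub contDiff_id)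
  let w : TestSpace Ω := TestSpace.mulLeft (fun z => b (y - z)) hb inter_subset_left v
  have hw : volume (support w) ≤ ENNReal.ofReal m := by
    refine (measure_mono fun z hz => ?_).trans hy
    have hz' : b (y - z) * v z ≠ 0 := hz
    have hmem : y - z ∈ support b := left_ne_zero_of_mul hz'
    rw [support_unitBump, mem_ball_zero_iff, ← dist_eq_norm] at hmem
    exact ⟨right_ne_zero_of_mul hz', Metric.mem_ball'.2 hmem⟩
  have hgrad : ∀ z, ‖∇ (fun z => b (y - z)) z‖ ^ 2 = ‖∇ b (y - z)‖ ^ 2 := fun z => by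
    have hd := (b.differentiable (y - z)).hasFDerivAt.comp z ((hasFDerivAt_id z).const_sub y)
    rw [norm_gradient, norm_gradient, HasFDerivAt.fderiv (f := fun z => b (y - z)) hd,
      ContinuousLinearMap.comp_neg, ContinuousLinearMap.comp_id, norm_neg]
  calc ∫ z, v z ^ 2 * b (y - z) ^ 2 = ∫ z, w z ^ 2 := by
        simp only [w, TestSpace.mulLeft_apply, mul_pow, mul_comm]
    _ ≤ faberKrahnConst N * m ^ ((2 : ℝ) / N) * dirichletForm Ω w w := by
        rw [dirichletForm_self]
        exact integral_sq_le_faberKrahnConst_mul hN w hm hw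
    _ ≤ _ := by
        have hpos := faberKrahnConst_pos (N := N)
        refine mul_le_mul_of_nonneg_left ?_ (by positivity)
        have hle := dirichletForm_mulLeft_self_le hb (Ω' := Ω) inter_subset_left v
        simp only [hgrad] at hle
        exact hle

theorem integral_sq_le_localFaberKrahnConst_mul (hN : 2 ≤ N) (v : TestSpace Ω) {m : ℝ}
    (hm : 0 ≤ m) (hsupp : ∀ y, volume (support v ∩ Metric.ball y 1) ≤ ENNReal.ofReal m) :
    ∫ z, v z ^ 2 ≤ localFaberKrahnConst N * m ^ ((2 : ℝ) / N) *
      ((∫ z, ‖∇ v z‖ ^ 2) + ∫ z, v z ^ 2) := by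
  set b := unitBump N
  have hvb := v.integrable_sq.integrable_convolution (.mul ℝ ℝ) b.integrable_sq
  have hgvb := v.integrable_norm_gradient_sq.integrable_convolution (.mul ℝ ℝ) b.integrable_sq
  have hvgb := v.integrable_sq.integrable_convolution (.mul ℝ ℝ) b.integrable_norm_gradient_sq
  have hint := integral_mono hvb (((hgvb.const_mul 2).add (hvgb.const_mul 2)).const_mul
    (faberKrahnConst N * m ^ ((2 : ℝ) / N)))
    fun y => convolution_sq_unitBump_le hN v hm (hsupp y)
  simp only [Pi.add_apply] at hint
  rw [integral_const_mul, integral_add (hgvb.const_mul 2) (hvgb.const_mul 2), integral_const_mul,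
    integral_const_mul, integral_convolution _ v.integrable_sq b.integrable_sq,
    integral_convolution _ v.integrable_norm_gradient_sq b.integrable_sq,
    integral_convolution _ v.integrable_sq b.integrable_norm_gradient_sq,
    ← b.norm_sq_eq, ← dirichletForm_self b] at hint
  simp only [ContinuousLinearMap.mul_apply'] at hint
  have hb := norm_unitBump_pos (N := N)
  have hFK := faberKrahnConst_pos (N := N)
  have hQ := dirichletForm_isPosSemidef.nonneg b
  have hmass : 0 ≤ ∫ z, v z ^ 2 := by positivity
  have henergy : 0 ≤ ∫ z, ‖∇ v z‖ ^ 2 := by positivity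
  rw [localFaberKrahnConst, div_mul_eq_mul_div, div_mul_eq_mul_div, le_div_iff₀ (by positivity)]
  calc _ ≤ _ := hint
    _ ≤ faberKrahnConst N * m ^ ((2 : ℝ) / N) * (2 * ((‖b‖ ^ 2 + dirichletForm univ b b) *
          ((∫ z, ‖∇ v z‖ ^ 2) + ∫ z, v z ^ 2))) := by
        refine mul_le_mul_of_nonneg_left ?_ (by positivity)
        nlinarith [mul_nonneg hmass (sq_nonneg ‖b‖), mul_nonneg henergy hQ]
    _ = _ := by ring

end FaberKrahn

/-! ### Cut-off functions and the Caccioppoli inequality -/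

section Cutoff

open scoped InnerProductSpace Gradient ContDiff
open Function (support)

variable {Ω A B : Set (EucN N)} {f g : EucN N → ℝ} {G s w : ℝ}

lemma exists_deriv_smoothTransition_sq_le :
    ∃ C : ℝ, 1 ≤ C ∧ ∀ t, deriv Real.smoothTransition t ^ 2 ≤ C := by
  have hcont : Continuous (deriv Real.smoothTransition) :=
    (Real.smoothTransition.contDiff (n := 1)).continuous_deriv (by simp)
  have hsupp : HasCompactSupport (deriv Real.smoothTransition) := by
    refine HasCompactSupport.intro (isCompact_Icc (a := (0 : ℝ)) (b := 1)) fun t ht => ?_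
    rcases not_and_or.1 ht with h0 | h1
    · refine IsLocalMin.deriv_eq_zero (Filter.Eventually.of_forall fun r => ?_)
      rw [Real.smoothTransition.zero_of_nonpos (not_le.1 h0).le]
      exact Real.smoothTransition.nonneg r
    · refine IsLocalMax.deriv_eq_zero (Filter.Eventually.of_forall fun r => ?_)
      rw [Real.smoothTransition.one_of_one_le (not_le.1 h1).le]
      exact Real.smoothTransition.le_one r
  obtain ⟨D, hD⟩ := hcont.bounded_above_of_compact_support hsupp
  refine ⟨D ^ 2 + 1, le_add_of_nonneg_left (sq_nonneg D), fun t => ?_⟩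
  have ht : deriv Real.smoothTransition t ^ 2 ≤ D ^ 2 :=
    sq_le_sq' (abs_le.1 (hD t)).1 (abs_le.1 (hD t)).2
  linarith

/-- A bound `≥ 1` for the squared derivative of `Real.smoothTransition`, hence for the squared
gradient of the cut-off functions at unit scale. -/
def cutoffConst : ℝ := exists_deriv_smoothTransition_sq_le.choose

lemma one_le_cutoffConst : 1 ≤ cutoffConst := exists_deriv_smoothTransition_sq_le.choose_spec.1

lemma deriv_smoothTransition_sq_le (t : ℝ) : deriv Real.smoothTransition t ^ 2 ≤ cutoffConst :=
  exists_deriv_smoothTransition_sq_le.choose_spec.2 t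

/-- `f` is a smooth cut-off function, equal to `1` on `A` and to `0` off `B`, with `|∇f|² ≤ G`. -/
structure IsCutoff (A B : Set (EucN N)) (G : ℝ) (f : EucN N → ℝ) : Prop where
  contDiff : ContDiff ℝ ∞ f
  nonneg : ∀ z, 0 ≤ f z
  le_one : ∀ z, f z ≤ 1
  eq_one : ∀ z ∈ A, f z = 1
  eq_zero : ∀ z ∉ B, f z = 0
  norm_gradient_sq_le : ∀ z, ‖∇ f z‖ ^ 2 ≤ G

lemma isCutoff_smoothTransition (hg : ContDiff ℝ ∞ g) (hg1 : LipschitzWith 1 g) (s : ℝ)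
    (hw : 0 < w) :
    IsCutoff {z | s + w ≤ g z} {z | s ≤ g z} (cutoffConst / w ^ 2)
      fun z => Real.smoothTransition ((g z - s) / w) where
  contDiff := Real.smoothTransition.contDiff.comp ((hg.sub contDiff_const).div_const w)
  nonneg _ := Real.smoothTransition.nonneg _
  le_one _ := Real.smoothTransition.le_one _
  eq_one z hz := Real.smoothTransition.one_of_one_le <| by
    rw [one_le_div hw]
    exact le_sub_iff_add_le'.2 hz
  eq_zero z hz := Real.smoothTransition.zero_of_nonpos <|
    div_nonpos_of_nonpos_of_nonneg (sub_nonpos.2 (not_le.1 hz).le) hw.le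
  norm_gradient_sq_le z := by
    set t := (g z - s) / w
    have hinner : HasFDerivAt (fun x => (g x - s) / w) (w⁻¹ • fderiv ℝ g z) z := by
      simpa only [div_eq_inv_mul, smul_eq_mul, Pi.smul_apply] using
        ((hg.differentiable (by simp) z).hasFDerivAt.sub_const s).fun_const_smul w⁻¹
    have houter : HasDerivAt Real.smoothTransition (deriv Real.smoothTransition t) t :=
      (Real.smoothTransition.contDiff (n := 1)).differentiable (by simp) t |>.hasDerivAt
    have hcomp : HasFDerivAt (fun x => Real.smoothTransition ((g x - s) / w))
        (deriv Real.smoothTransition t • w⁻¹ • fderiv ℝ g z) z :=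
      HasDerivAt.comp_hasFDerivAt (h₂ := Real.smoothTransition) z houter hinner
    have hgz : ‖fderiv ℝ g z‖ ≤ 1 := norm_fderiv_le_of_lipschitz ℝ hg1
    rw [norm_gradient, hcomp.fderiv, norm_smul, norm_smul, mul_pow, mul_pow,
      Real.norm_eq_abs, Real.norm_eq_abs, sq_abs, sq_abs, inv_pow]
    calc deriv Real.smoothTransition t ^ 2 * ((w ^ 2)⁻¹ * ‖fderiv ℝ g z‖ ^ 2)
        ≤ cutoffConst * ((w ^ 2)⁻¹ * 1 ^ 2) := by
          gcongr
          exacts [zero_le_one.trans one_le_cutoffConst, deriv_smoothTransition_sq_le t]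
      _ = cutoffConst / w ^ 2 := by ring

/-- The `L²` mass of `u` on `A`. -/
def massOn (u : TestSpace Ω) (A : Set (EucN N)) : ℝ := ∫ z in A, u z ^ 2

/-- The full `W^{1,2}` energy of `u` on `A`. -/
def energyOn (u : TestSpace Ω) (A : Set (EucN N)) : ℝ := massOn u A + ∫ z in A, ‖∇ u z‖ ^ 2

variable (u : TestSpace Ω)

lemma massOn_nonneg : 0 ≤ massOn u A := by
  unfold massOn
  positivity

lemma massOn_mono (hAB : A ⊆ B) : massOn u A ≤ massOn u B :=
  setIntegral_mono_set u.integrable_sq.integrableOn (ae_of_all _ fun _ => sq_nonneg _)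
    hAB.eventuallyLE

lemma massOn_le_norm_sq : massOn u A ≤ ‖u‖ ^ 2 := by
  rw [u.norm_sq_eq]
  exact setIntegral_le_integral u.integrable_sq (ae_of_all _ fun _ => sq_nonneg _)

lemma setIntegral_norm_gradient_sq_le : ∫ z in A, ‖∇ u z‖ ^ 2 ≤ dirichletForm Ω u u := by
  rw [dirichletForm_self]
  exact setIntegral_le_integral u.integrable_norm_gradient_sq (ae_of_all _ fun _ => sq_nonneg _)

lemma energyOn_nonneg : 0 ≤ energyOn u A := by
  have := massOn_nonneg u (A := A)
  unfold energyOn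
  positivity

lemma massOn_le_energyOn : massOn u A ≤ energyOn u A :=
  le_add_of_nonneg_right (by positivity)

lemma energyOn_mono (hAB : A ⊆ B) : energyOn u A ≤ energyOn u B :=
  add_le_add (massOn_mono u hAB) <|
    setIntegral_mono_set u.integrable_norm_gradient_sq.integrableOn
      (ae_of_all _ fun _ => sq_nonneg _) hAB.eventuallyLE

lemma setIntegral_le_integral_mul {α : Type*} [MeasurableSpace α] {ν : Measure α} {S : Set α}
    (hS : MeasurableSet S) {F h : α → ℝ} (hFh : Integrable (fun z => F z * h z) ν)
    (hF : ∀ z, 0 ≤ F z) (hh : ∀ z, 0 ≤ h z) (h1 : ∀ z ∈ S, h z = 1) :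
    ∫ z in S, F z ∂ν ≤ ∫ z, F z * h z ∂ν :=
  calc ∫ z in S, F z ∂ν = ∫ z in S, F z * h z ∂ν :=
        setIntegral_congr_fun hS fun z hz => by rw [h1 z hz, mul_one]
    _ ≤ ∫ z, F z * h z ∂ν :=
        setIntegral_le_integral hFh (ae_of_all _ fun z => mul_nonneg (hF z) (hh z))

lemma integral_mul_le_mul_setIntegral {α : Type*} [MeasurableSpace α] {ν : Measure α} {S : Set α}
    {F h : α → ℝ} {c : ℝ} (hFi : Integrable F ν) (hFh : Integrable (fun z => F z * h z) ν)
    (hF : ∀ z, 0 ≤ F z) (hc : ∀ z, h z ≤ c) (h0 : ∀ z ∉ S, h z = 0) :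
    ∫ z, F z * h z ∂ν ≤ c * ∫ z in S, F z ∂ν := by
  rw [← setIntegral_eq_integral_of_forall_compl_eq_zero fun z hz => by rw [h0 z hz, mul_zero],
    ← integral_const_mul]
  refine integral_mono hFh.integrableOn (hFi.integrableOn.const_mul c) fun z => ?_
  change F z * h z ≤ c * F z
  rw [mul_comm]
  exact mul_le_mul_of_nonneg_right (hc z) (hF z)

namespace IsCutoff

/-- The product `f u`, for a cut-off function `f`. -/
def mul (hf : IsCutoff A B G f) (u : TestSpace Ω) : TestSpace Ω :=
  TestSpace.mulLeft f hf.contDiff inter_subset_left u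

lemma sq_le_one (hf : IsCutoff A B G f) (z : EucN N) : f z ^ 2 ≤ 1 :=
  pow_le_one₀ (hf.nonneg z) (hf.le_one z)

lemma gradient_eq_zero (hf : IsCutoff A B G f) (z : EucN N) (hz : z ∉ B) : ∇ f z = 0 := by
  have hmin : IsLocalMin f z := Filter.Eventually.of_forall fun y => by
    rw [hf.eq_zero z hz]
    exact hf.nonneg y
  rw [gradient, hmin.fderiv_eq_zero, map_zero]

lemma continuous_sq (hf : IsCutoff A B G f) : Continuous fun z => f z ^ 2 :=
  hf.contDiff.continuous.fun_pow 2

lemma continuous_norm_gradient_sq (hf : IsCutoff A B G f) : Continuous fun z => ‖∇ f z‖ ^ 2 :=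
  (continuous_gradient hf.contDiff (by simp)).norm.fun_pow 2

lemma integral_sq_mul_norm_gradient_sq_le (hf : IsCutoff A B G f) :
    ∫ z, u z ^ 2 * ‖∇ f z‖ ^ 2 ≤ G * massOn u B :=
  integral_mul_le_mul_setIntegral u.integrable_sq
    (u.integrable_sq_mul hf.continuous_norm_gradient_sq) (fun _ => sq_nonneg _)
    hf.norm_gradient_sq_le fun z hz => by
      rw [hf.gradient_eq_zero z hz, norm_zero, zero_pow two_ne_zero]

lemma integral_sq_mul_sq_le (hf : IsCutoff A B G f) : ∫ z, u z ^ 2 * f z ^ 2 ≤ massOn u B := by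
  simpa only [one_mul, massOn] using integral_mul_le_mul_setIntegral u.integrable_sq
    (u.integrable_sq_mul hf.continuous_sq) (fun _ => sq_nonneg _) hf.sq_le_one
    fun z hz => by rw [hf.eq_zero z hz, zero_pow two_ne_zero]

lemma mul_apply (hf : IsCutoff A B G f) (z : EucN N) : hf.mul u z = f z * u z := rfl

lemma norm_mul_sq_eq (hf : IsCutoff A B G f) : ‖hf.mul u‖ ^ 2 = ∫ z, u z ^ 2 * f z ^ 2 := by
  simp only [TestSpace.norm_sq_eq, mul_apply, mul_pow, mul_comm]

lemma norm_mul_sq_le (hf : IsCutoff A B G f) : ‖hf.mul u‖ ^ 2 ≤ massOn u B :=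
  (hf.norm_mul_sq_eq u).trans_le (hf.integral_sq_mul_sq_le u)

lemma massOn_le_norm_mul_sq (hf : IsCutoff A B G f) (hA : MeasurableSet A) :
    massOn u A ≤ ‖hf.mul u‖ ^ 2 := by
  rw [norm_mul_sq_eq]
  exact setIntegral_le_integral_mul hA (u.integrable_sq_mul hf.continuous_sq)
    (fun _ => sq_nonneg _) (fun _ => sq_nonneg _) fun z hz => by rw [hf.eq_one z hz, one_pow]

lemma dirichletForm_mul_self_le_setIntegral (hf : IsCutoff A B G f) :
    dirichletForm Ω (hf.mul u) (hf.mul u) ≤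
      2 * (∫ z in B, ‖∇ u z‖ ^ 2) + 2 * G * massOn u B := by
  have hgrad : ∫ z, ‖∇ u z‖ ^ 2 * f z ^ 2 ≤ ∫ z in B, ‖∇ u z‖ ^ 2 := by
    simpa only [one_mul] using integral_mul_le_mul_setIntegral u.integrable_norm_gradient_sq
      (u.integrable_norm_gradient_sq_mul hf.continuous_sq) (fun _ => sq_nonneg _) hf.sq_le_one
      fun z hz => by rw [hf.eq_zero z hz, zero_pow two_ne_zero]
  have hle := dirichletForm_mulLeft_self_le hf.contDiff (Ω' := Ω) inter_subset_left u
  have hmass := hf.integral_sq_mul_norm_gradient_sq_le u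
  change dirichletForm Ω (hf.mul u) (hf.mul u) ≤ _ at hle
  linarith

lemma dirichletForm_mul_self_le (hf : IsCutoff A B G f) (hG : 0 ≤ G) :
    dirichletForm Ω (hf.mul u) (hf.mul u) ≤ 2 * dirichletForm Ω u u + 2 * G * ‖u‖ ^ 2 := by
  refine (hf.dirichletForm_mul_self_le_setIntegral u).trans ?_
  gcongr
  exacts [setIntegral_norm_gradient_sq_le u, massOn_le_norm_sq u]

lemma dirichletForm_mul_self_add_norm_sq_le (hf : IsCutoff A B G f) (hG : 1 ≤ G) :
    dirichletForm Ω (hf.mul u) (hf.mul u) + ‖hf.mul u‖ ^ 2 ≤ 3 * G * energyOn u B := by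
  have henergy := hf.dirichletForm_mul_self_le_setIntegral u
  have hmass := hf.norm_mul_sq_le u
  have hmass0 := massOn_nonneg u (A := B)
  have hgrad0 : 0 ≤ ∫ z in B, ‖∇ u z‖ ^ 2 := by positivity
  rw [energyOn]
  nlinarith [mul_nonneg (sub_nonneg.2 hG) hmass0, mul_nonneg (sub_nonneg.2 hG) hgrad0]

lemma setIntegral_norm_gradient_sq_le (hf : IsCutoff A B G f) (hA : MeasurableSet A) :
    ∫ z in A, ‖∇ u z‖ ^ 2 ≤
      2 * dirichletForm Ω u (hf.mul (hf.mul u)) + 4 * G * massOn u B := by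
  have hint := u.integrable_norm_gradient_sq_mul hf.continuous_sq
  have hinner := (u.integrable_inner_gradient (hf.mul (hf.mul u)).continuous_gradient).const_mul 2
  have hcutoff := (u.integrable_sq_mul hf.continuous_norm_gradient_sq).const_mul 4
  calc ∫ z in A, ‖∇ u z‖ ^ 2 ≤ ∫ z, ‖∇ u z‖ ^ 2 * f z ^ 2 :=
        setIntegral_le_integral_mul hA hint (fun _ => sq_nonneg _) (fun _ => sq_nonneg _)
          fun z hz => by rw [hf.eq_one z hz, one_pow]
    _ ≤ ∫ z, (2 * ⟪∇ u z, ∇ (hf.mul (hf.mul u)) z⟫_ℝ + 4 * (u z ^ 2 * ‖∇ f z‖ ^ 2)) := by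
        refine integral_mono hint (hinner.add hcutoff) fun z => ?_
        have hz := sq_mul_norm_gradient_sq_le (hf.contDiff.differentiable (by simp) z)
          (u.differentiable z)
        change ‖∇ u z‖ ^ 2 * f z ^ 2 ≤
          2 * ⟪∇ u z, ∇ (fun x => f x * (f x * u x)) z⟫_ℝ + 4 * (u z ^ 2 * ‖∇ f z‖ ^ 2)
        linarith
    _ = 2 * dirichletForm Ω u (hf.mul (hf.mul u)) + 4 * ∫ z, u z ^ 2 * ‖∇ f z‖ ^ 2 := by
        rw [integral_add hinner hcutoff, integral_const_mul, integral_const_mul,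
          dirichletForm_apply]
    _ ≤ _ := by linarith [hf.integral_sq_mul_norm_gradient_sq_le u]

lemma caccioppoli (hf : IsCutoff A B G f) (hA : MeasurableSet A) (hG : 1 ≤ G) {η μ : ℝ}
    (hη : 0 ≤ η) (hnorm : ‖u‖ = 1) (hμ : dirichletForm Ω u u = μ)
    (hweak : ∀ v, (dirichletForm Ω u v - μ * ⟪u, v⟫_ℝ) ^ 2 ≤
      η * (dirichletForm Ω v v + ‖v‖ ^ 2)) :
    energyOn u A ≤ (2 * μ + 4 * G + 1) * massOn u B + 2 * √(η * (G * (4 * μ + 7))) := by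
  set v := hf.mul (hf.mul u)
  have hμ0 : 0 ≤ μ := hμ ▸ dirichletForm_isPosSemidef.nonneg u
  have hfu : ‖hf.mul u‖ ^ 2 ≤ 1 := by
    simpa only [hnorm, one_pow] using (hf.norm_mul_sq_le u).trans (massOn_le_norm_sq u)
  have hv : dirichletForm Ω v v + ‖v‖ ^ 2 ≤ G * (4 * μ + 7) := by
    have hQfu := hf.dirichletForm_mul_self_le u (zero_le_one.trans hG)
    have hQv := hf.dirichletForm_mul_self_le (hf.mul u) (zero_le_one.trans hG)
    have hmass := (hf.norm_mul_sq_le (hf.mul u)).trans (massOn_le_norm_sq _)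
    rw [hnorm, hμ] at hQfu
    nlinarith [mul_nonneg (sub_nonneg.2 hG) hμ0, mul_nonneg (sub_nonneg.2 hG) (sub_nonneg.2 hfu)]
  have hinner : ⟪u, v⟫_ℝ ≤ massOn u B := by
    refine le_of_eq_of_le ?_ (hf.integral_sq_mul_sq_le u)
    rw [TestSpace.inner_eq]
    refine integral_congr_ae (ae_of_all _ fun z => ?_)
    change u z * (f z * (f z * u z)) = u z ^ 2 * f z ^ 2
    ring
  have hQ : dirichletForm Ω u v - μ * ⟪u, v⟫_ℝ ≤ √(η * (G * (4 * μ + 7))) :=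
    Real.le_sqrt_of_sq_le ((hweak v).trans (by gcongr))
  have hgrad := hf.setIntegral_norm_gradient_sq_le u hA
  have hmass := (hf.massOn_le_norm_mul_sq u hA).trans (hf.norm_mul_sq_le u)
  rw [energyOn]
  linarith [mul_le_mul_of_nonneg_left hinner hμ0]

end IsCutoff

end Cutoff

/-! ### Energy decay and truncation for systems of approximate eigenfunctions -/

section Systems

open scoped Gradient ContDiff
open Function (support)
open Module (finrank)
open LinearMap (BilinForm)

lemma norm_sq_sum_smul_le {ι F : Type*} [Fintype ι] [NormedAddCommGroup F] [NormedSpace ℝ F]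
    (β : ι → ℝ) (x : ι → F) : ‖∑ i, β i • x i‖ ^ 2 ≤ (∑ i, β i ^ 2) * ∑ i, ‖x i‖ ^ 2 :=
  calc ‖∑ i, β i • x i‖ ^ 2 ≤ (∑ i, |β i| * ‖x i‖) ^ 2 := by
        gcongr
        exact norm_sum_le_of_le _ fun i _ => (norm_smul_le _ _).trans_eq rfl
    _ ≤ (∑ i, |β i| ^ 2) * ∑ i, ‖x i‖ ^ 2 := Finset.sum_mul_sq_le_sq_mul_sq _ _ _
    _ = (∑ i, β i ^ 2) * ∑ i, ‖x i‖ ^ 2 := by simp only [sq_abs]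

lemma integral_norm_sq_sum_smul_le {ι α F : Type*} [Fintype ι] [NormedAddCommGroup F]
    [NormedSpace ℝ F] [MeasurableSpace α] {ν : Measure α} (β : ι → ℝ) {x : ι → α → F}
    (hx : ∀ i, Integrable (fun z => ‖x i z‖ ^ 2) ν)
    (hsum : Integrable (fun z => ‖∑ i, β i • x i z‖ ^ 2) ν) :
    ∫ z, ‖∑ i, β i • x i z‖ ^ 2 ∂ν ≤ (∑ i, β i ^ 2) * ∑ i, ∫ z, ‖x i z‖ ^ 2 ∂ν := by
  rw [← integral_finsetSum _ fun i _ => hx i, ← integral_const_mul]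
  exact integral_mono hsum ((integrable_finsetSum _ fun i _ => hx i).const_mul _)
    fun z => norm_sq_sum_smul_le β fun i => x i z

variable {Ω Ω' A B B' : Set (EucN N)} {f f' g : EucN N → ℝ} {G P M c s w η : ℝ} {n : ℕ}
  {u : Fin n → TestSpace Ω} {μ : Fin n → ℝ}

lemma TestSpace.gradient_sum_smul {ι : Type*} [Fintype ι] (β : ι → ℝ) (u : ι → TestSpace Ω)
    (z : EucN N) : ∇ ⇑(∑ i, β i • u i) z = ∑ i, β i • ∇ (u i) z := by
  let gradientₗ : TestSpace Ω →ₗ[ℝ] EucN N :=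
    { toFun := fun v => ∇ v z
      map_add' := fun v w => gradient_add v w z
      map_smul' := fun a v => gradient_smul a v z }
  change gradientₗ (∑ i, β i • u i) = ∑ i, β i • gradientₗ (u i)
  simp only [map_sum, map_smul]

/-- The total `W^{1,2}` energy on `A` of a finite system of test functions. -/
def totalEnergyOn (u : Fin n → TestSpace Ω) (A : Set (EucN N)) : ℝ := ∑ j, energyOn (u j) A

lemma totalEnergyOn_nonneg : 0 ≤ totalEnergyOn u A :=
  Finset.sum_nonneg fun j _ => energyOn_nonneg (u j)

lemma totalEnergyOn_mono (hAB : A ⊆ B) : totalEnergyOn u A ≤ totalEnergyOn u B :=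
  Finset.sum_le_sum fun j _ => energyOn_mono (u j) hAB

lemma totalEnergyOn_comp_le {m : ℕ} (e : Fin m ↪o Fin n) :
    totalEnergyOn (u ∘ e) A ≤ totalEnergyOn u A :=
  calc totalEnergyOn (u ∘ e) A = ∑ j ∈ Finset.univ.map e.toEmbedding, energyOn (u j) A :=
        (Finset.sum_map Finset.univ e.toEmbedding fun j => energyOn (u j) A).symm
    _ ≤ totalEnergyOn u A := Finset.sum_le_sum_of_subset_of_nonneg (Finset.subset_univ _)
        fun j _ _ => energyOn_nonneg (u j)

lemma energyOn_sum_smul_le (β : Fin n → ℝ) (u : Fin n → TestSpace Ω) :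
    energyOn (∑ j, β j • u j) A ≤ (∑ j, β j ^ 2) * totalEnergyOn u A := by
  have hmass := integral_norm_sq_sum_smul_le (ν := volume.restrict A) β (x := fun j z => u j z)
    (fun j => by simpa only [Real.norm_eq_abs, sq_abs] using (u j).integrable_sq.restrict)
    (by simpa only [Real.norm_eq_abs, sq_abs, smul_eq_mul, ← TestSpace.sum_smul_apply] using
      (∑ j, β j • u j).integrable_sq.restrict)
  have hgrad := integral_norm_sq_sum_smul_le (ν := volume.restrict A) β (x := fun j z => ∇ (u j) z)
    (fun j => (u j).integrable_norm_gradient_sq.restrict)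
    (by simpa only [← TestSpace.gradient_sum_smul] using
      (∑ j, β j • u j).integrable_norm_gradient_sq.restrict)
  simp only [Real.norm_eq_abs, sq_abs, smul_eq_mul, ← TestSpace.sum_smul_apply] at hmass
  simp only [← TestSpace.gradient_sum_smul] at hgrad
  rw [totalEnergyOn]
  simp only [energyOn, massOn, Finset.sum_add_distrib, mul_add]
  exact add_le_add hmass hgrad

lemma IsRitzSystem.totalEnergyOn_le (h : IsRitzSystem (dirichletForm Ω) u μ)
    (hμ : ∀ j, μ j ≤ M) : totalEnergyOn u A ≤ n * (1 + M) := by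
  have hle : ∀ j, energyOn (u j) A ≤ 1 + M := fun j => by
    have hmass := massOn_le_norm_sq (u j) (A := A)
    have hgrad := setIntegral_norm_gradient_sq_le (u j) (A := A)
    rw [h.orthonormal.1 j, one_pow] at hmass
    rw [h.diag, if_pos rfl] at hgrad
    exact add_le_add hmass (hgrad.trans (hμ j))
  exact (Finset.sum_le_sum fun j _ => hle j).trans_eq <| by
    rw [Finset.sum_const, Finset.card_univ, Fintype.card_fin, nsmul_eq_mul]

/-- Caccioppoli on `A ⊆ B`, followed by a Poincaré inequality on `B ⊆ B'`. -/
lemma IsApproxEigensystem.totalEnergyOn_le_of_poincare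
    (h : IsApproxEigensystem (dirichletForm Ω) η u μ) (hμ : ∀ j, μ j ≤ M) (hη : 0 ≤ η)
    (hf : IsCutoff A B G f) (hf' : IsCutoff B B' G f') (hG : 1 ≤ G) (hA : MeasurableSet A)
    (hB : MeasurableSet B) (hP0 : 0 ≤ P)
    (hP : ∀ v : TestSpace Ω, support v ⊆ Ω ∩ B' →
      ‖v‖ ^ 2 ≤ P * (dirichletForm Ω v v + ‖v‖ ^ 2)) :
    totalEnergyOn u A ≤
      3 * (2 * M + 5) * G ^ 2 * P * totalEnergyOn u B' + n * (2 * √(η * (G * (4 * M + 7)))) := by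
  have hle : ∀ j, energyOn (u j) A ≤
      3 * (2 * M + 5) * G ^ 2 * P * energyOn (u j) B' + 2 * √(η * (G * (4 * M + 7))) := fun j => by
    have hM : 0 ≤ M := (h.nonneg dirichletForm_isPosSemidef.isNonneg j).trans (hμ j)
    have : 0 ≤ energyOn (u j) B' := energyOn_nonneg (u j)
    have hmass : massOn (u j) B ≤ P * (3 * G * energyOn (u j) B') :=
      ((hf'.massOn_le_norm_mul_sq (u j) hB).trans (hP _ fun z hz =>
        ⟨(hf'.mul (u j)).tsupport_subset (subset_tsupport _ hz), by
          contrapose! hz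
          rw [Function.notMem_support, hf'.mul_apply, hf'.eq_zero z hz, zero_mul]⟩)).trans <| by
        gcongr
        exact hf'.dirichletForm_mul_self_add_norm_sq_le (u j) hG
    calc energyOn (u j) A
        ≤ (2 * μ j + 4 * G + 1) * massOn (u j) B + 2 * √(η * (G * (4 * μ j + 7))) :=
          hf.caccioppoli (u j) hA hG hη (h.orthonormal.1 j) (by simp [h.diag]) fun v => h.weak v j
      _ ≤ ((2 * M + 5) * G) * (P * (3 * G * energyOn (u j) B')) +
            2 * √(η * (G * (4 * M + 7))) := by
          have hcoef : 2 * μ j + 4 * G + 1 ≤ (2 * M + 5) * G := by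
            nlinarith [hμ j, mul_nonneg hM (sub_nonneg.2 hG)]
          have hmass0 := massOn_nonneg (u j) (A := B)
          gcongr ?_ * ?_ + 2 * √(η * (G * (4 * ?_ + 7)))
          exact hμ j
      _ = _ := by ring
  refine (Finset.sum_le_sum fun j _ => hle j).trans_eq ?_
  simp only [totalEnergyOn, Finset.mul_sum, Finset.sum_add_distrib, Finset.sum_const,
    Finset.card_univ, Fintype.card_fin, nsmul_eq_mul]

/-- The factor of the energy in `IsApproxEigensystem.totalEnergyOn_superlevel_le`. -/
def decayConst (M : ℝ) : ℝ := 3 * (2 * M + 5) * cutoffConst ^ 2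

/-- The factor of the defect in `IsApproxEigensystem.totalEnergyOn_superlevel_le`. -/
def defectConst (n : ℕ) (M : ℝ) : ℝ := n * (2 * √(cutoffConst * (4 * M + 7)))

lemma defectConst_nonneg : 0 ≤ defectConst n M := by
  unfold defectConst
  positivity

lemma IsApproxEigensystem.totalEnergyOn_superlevel_le (hg : ContDiff ℝ ∞ g)
    (hg1 : LipschitzWith 1 g) (h : IsApproxEigensystem (dirichletForm Ω) η u μ)
    (hμ : ∀ j, μ j ≤ M) (hη : 0 ≤ η) (hw : 0 < w) (hw1 : w ≤ 1) (hP0 : 0 ≤ P)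
    (hP : ∀ v : TestSpace Ω, support v ⊆ Ω ∩ {z | s ≤ g z} →
      ‖v‖ ^ 2 ≤ P * (dirichletForm Ω v v + ‖v‖ ^ 2)) :
    totalEnergyOn u {z | s + 2 * w ≤ g z} ≤
      decayConst M / w ^ 4 * P * totalEnergyOn u {z | s ≤ g z} + defectConst n M / w * √η := by
  have hmeas : ∀ r, MeasurableSet {z | r ≤ g z} := fun r =>
    measurableSet_le measurable_const hg.continuous.measurable
  have hf := isCutoff_smoothTransition hg hg1 (s + w) hw
  rw [add_assoc, ← two_mul] at hf
  have hG : 1 ≤ cutoffConst / w ^ 2 :=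
    (one_le_div (by positivity)).2 ((pow_le_one₀ hw.le hw1).trans one_le_cutoffConst)
  have hdefect : √(η * (cutoffConst / w ^ 2 * (4 * M + 7))) =
      √(cutoffConst * (4 * M + 7)) / w * √η := by
    rw [Real.sqrt_mul hη, div_mul_eq_mul_div, Real.sqrt_div' _ (sq_nonneg w), Real.sqrt_sq hw.le,
      mul_comm]
  refine (h.totalEnergyOn_le_of_poincare hμ hη hf (isCutoff_smoothTransition hg hg1 s hw) hG
    (hmeas _) (hmeas _) hP0 hP).trans_eq ?_
  rw [hdefect, decayConst, defectConst]
  ring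

lemma IsMinMaxBound.of_perturbation {X Y : Type*} [NormedAddCommGroup X] [InnerProductSpace ℝ X]
    [NormedAddCommGroup Y] [InnerProductSpace ℝ Y] {Q : BilinForm ℝ X} {Q' : BilinForm ℝ Y}
    (T : X →ₗ[ℝ] Y) (V : Submodule ℝ X) [FiniteDimensional ℝ V] {c δ ε : ℝ} (hc : 0 ≤ c)
    (hδ : 0 ≤ δ) (hε : 0 ≤ ε) (hε2 : ε ≤ 1 / 2) (hQ : ∀ x ∈ V, Q x x ≤ c * ‖x‖ ^ 2)
    (hnorm : ∀ x ∈ V, (1 - ε) * ‖x‖ ^ 2 ≤ ‖T x‖ ^ 2)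
    (hQ' : ∀ x ∈ V, Q' (T x) (T x) ≤ Q x x + δ * ‖x‖ ^ 2) :
    IsMinMaxBound Q' (finrank ℝ V) (c + 2 * (δ + c * ε)) := by
  refine IsMinMaxBound.map T V (fun x hx hTx => ?_) fun x hx => ?_
  · have hx0 := hnorm x hx
    rw [hTx, norm_zero, zero_pow two_ne_zero] at hx0
    have : ‖x‖ ^ 2 = 0 := by nlinarith [sq_nonneg ‖x‖]
    simpa using this
  · have hcoef : c + δ ≤ (c + 2 * (δ + c * ε)) * (1 - ε) := by
      nlinarith [mul_nonneg hδ (sub_nonneg.2 hε2),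
        mul_nonneg (mul_nonneg hc hε) (sub_nonneg.2 hε2)]
    calc Q' (T x) (T x) ≤ (c + δ) * ‖x‖ ^ 2 := by linarith [hQ x hx, hQ' x hx]
      _ ≤ (c + 2 * (δ + c * ε)) * (1 - ε) * ‖x‖ ^ 2 := by gcongr
      _ = (c + 2 * (δ + c * ε)) * ((1 - ε) * ‖x‖ ^ 2) := by ring
      _ ≤ (c + 2 * (δ + c * ε)) * ‖T x‖ ^ 2 := by
          gcongr
          exact hnorm x hx

namespace IsCutoff

lemma contDiff_one_sub (hf : IsCutoff A B G f) : ContDiff ℝ ∞ fun z => 1 - f z :=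
  contDiff_const.sub hf.contDiff

variable (h : Ω ∩ tsupport (fun z => 1 - f z) ⊆ Ω') (v : TestSpace Ω)

lemma norm_sq_sub_energyOn_le (hf : IsCutoff A B G f) (hB : MeasurableSet B) :
    ‖v‖ ^ 2 - energyOn v B ≤ ‖TestSpace.mulLeft _ hf.contDiff_one_sub h v‖ ^ 2 := by
  rw [TestSpace.norm_sq_eq, TestSpace.norm_sq_eq, sub_le_iff_le_add]
  have hint := TestSpace.integrable_sq (TestSpace.mulLeft _ hf.contDiff_one_sub h v)
  refine le_trans ?_ (add_le_add_right (massOn_le_energyOn v) _)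
  rw [massOn, ← integral_indicator hB, ← integral_add hint (v.integrable_sq.indicator hB)]
  refine integral_mono v.integrable_sq (hint.add (v.integrable_sq.indicator hB)) fun z => ?_
  by_cases hz : z ∈ B
  · simpa only [indicator_of_mem hz] using le_add_of_nonneg_left (sq_nonneg _)
  · simp only [indicator_of_notMem hz, TestSpace.mulLeft_apply, hf.eq_zero z hz, sub_zero, one_mul,
      add_zero, le_refl]

lemma norm_gradient_one_sub_mul_sq_le (hf : IsCutoff A B G f) (hG : 1 ≤ G) (z : EucN N) :
    ‖∇ (fun x => (1 - f x) * v x) z‖ ^ 2 ≤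
      ‖∇ v z‖ ^ 2 + B.indicator (fun z => 2 * G * (v z ^ 2 + ‖∇ v z‖ ^ 2)) z := by
  have hd := hf.contDiff.differentiable (by simp) z
  have hgrad : ∇ (fun x => 1 - f x) z = -∇ f z := by
    simp only [gradient, fderiv_const_sub, map_neg]
  by_cases hz : z ∈ B
  · have hmul := norm_gradient_mul_sq_le (hd.const_sub 1) (v.differentiable z)
    have hone : (1 - f z) ^ 2 ≤ 1 :=
      pow_le_one₀ (sub_nonneg.2 (hf.le_one z)) (sub_le_self 1 (hf.nonneg z))
    rw [hgrad, norm_neg] at hmul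
    rw [indicator_of_mem hz]
    nlinarith [mul_le_mul_of_nonneg_left (hf.norm_gradient_sq_le z) (sq_nonneg (v z)),
      mul_le_mul_of_nonneg_right hone (sq_nonneg ‖∇ v z‖),
      mul_nonneg (sub_nonneg.2 hG) (sq_nonneg ‖∇ v z‖)]
  · rw [gradient_fun_mul (hd.const_sub 1) (v.differentiable z), hgrad, hf.gradient_eq_zero z hz,
      hf.eq_zero z hz, indicator_of_notMem hz]
    simp

lemma dirichletForm_one_sub_mul_self_le (hf : IsCutoff A B G f) (hG : 1 ≤ G)
    (hB : MeasurableSet B) :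
    dirichletForm Ω' (TestSpace.mulLeft _ hf.contDiff_one_sub h v)
      (TestSpace.mulLeft _ hf.contDiff_one_sub h v) ≤
      dirichletForm Ω v v + 2 * G * energyOn v B := by
  have hint : Integrable fun z => 2 * G * (v z ^ 2 + ‖∇ v z‖ ^ 2) :=
    (v.integrable_sq.add v.integrable_norm_gradient_sq).const_mul (2 * G)
  rw [energyOn, massOn, ← integral_add v.integrable_sq.integrableOn
    v.integrable_norm_gradient_sq.integrableOn, ← integral_const_mul, ← integral_indicator hB,
    dirichletForm_self, dirichletForm_self,
    ← integral_add v.integrable_norm_gradient_sq (hint.indicator hB)]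
  exact integral_mono (TestSpace.integrable_norm_gradient_sq _)
    (v.integrable_norm_gradient_sq.add (hint.indicator hB))
    (hf.norm_gradient_one_sub_mul_sq_le v hG)

lemma isMinMaxBound_of_isRitzSystem (hf : IsCutoff A B G f) (hG : 1 ≤ G) (hB : MeasurableSet B)
    (hu : IsRitzSystem (dirichletForm Ω) u μ) (hc : 0 ≤ c) (hμ : ∀ j, μ j ≤ c)
    (hE : totalEnergyOn u B ≤ 1 / 2) (h : Ω ∩ tsupport (fun z => 1 - f z) ⊆ Ω') :
    IsMinMaxBound (dirichletForm Ω') n (c + (4 * G + 2 * c) * totalEnergyOn u B) := by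
  set E := totalEnergyOn u B
  set V := Submodule.span ℝ (range u)
  have hE0 : 0 ≤ E := totalEnergyOn_nonneg
  have hV : finrank ℝ V = n := by
    simp [V, finrank_span_eq_card hu.orthonormal.linearIndependent]
  have hform : ∀ v ∈ V, dirichletForm Ω v v ≤ c * ‖v‖ ^ 2 ∧ energyOn v B ≤ ‖v‖ ^ 2 * E := by
    intro v hv
    obtain ⟨β, rfl⟩ := (Submodule.mem_span_range_iff_exists_fun ℝ).1 hv
    rw [hu.apply_sum_self, norm_sq_sum_smul_of_orthonormal hu.orthonormal, Finset.mul_sum]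
    refine ⟨?_, energyOn_sum_smul_le β u⟩
    gcongr with j
    exact hμ j
  have : FiniteDimensional ℝ V := FiniteDimensional.span_of_finite ℝ (finite_range u)
  have hbound := IsMinMaxBound.of_perturbation (Q' := dirichletForm Ω')
    (TestSpace.mulLeft _ hf.contDiff_one_sub h) V hc
    (δ := 2 * G * E) (by positivity) hE0 hE (fun v hv => (hform v hv).1)
    (fun v hv => by linarith [hf.norm_sq_sub_energyOn_le h v hB, (hform v hv).2])
    (fun v hv => by
      have := mul_le_mul_of_nonneg_left (hform v hv).2 (by positivity : 0 ≤ 2 * G)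
      linarith [hf.dirichletForm_one_sub_mul_self_le h v hG hB])
  rw [hV] at hbound
  exact hbound.mono (le_of_eq (by ring))

end IsCutoff

lemma IsRitzSystem.isMinMaxBound_sublevel (hg : ContDiff ℝ ∞ g) (hg1 : LipschitzWith 1 g)
    (h : IsRitzSystem (dirichletForm Ω) u μ) (hμ : ∀ j, μ j ≤ M) (hw : 0 < w) (hw1 : w ≤ 1)
    (hE : totalEnergyOn u {z | s ≤ g z} ≤ 1 / 2) (i : Fin n) :
    IsMinMaxBound (dirichletForm (Ω ∩ {z | g z < s + w})) (i + 1)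
      (μ i + (16 * cutoffConst + 2 * M) / w ^ 2 * totalEnergyOn u {z | s ≤ g z}) := by
  have hf := isCutoff_smoothTransition hg hg1 s (half_pos hw)
  have hμ0 : 0 ≤ μ i := h.nonneg dirichletForm_isPosSemidef.isNonneg i
  have hw2 : w ^ 2 ≤ 1 := pow_le_one₀ hw.le hw1
  have hsupp : Ω ∩ tsupport (fun z => 1 - Real.smoothTransition ((g z - s) / (w / 2))) ⊆
      Ω ∩ {z | g z < s + w} := by
    refine inter_subset_inter_right _ fun z hz => ?_
    have hle : g z ≤ s + w / 2 := by
      refine closure_minimal (t := {z | g z ≤ s + w / 2}) (fun y hy => ?_)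
        (isClosed_le hg.continuous continuous_const) hz
      by_contra hlt
      have hle : s + w / 2 ≤ g y := (not_le.1 hlt).le
      exact hy (sub_eq_zero.2 (hf.eq_one y hle).symm)
    exact hle.trans_lt (by linarith)
  have hG : 1 ≤ cutoffConst / (w / 2) ^ 2 :=
    (one_le_div (by positivity)).2 (by nlinarith [one_le_cutoffConst])
  let e := Fin.castLEOrderEmb (Nat.succ_le_of_lt i.2)
  have hle : totalEnergyOn (u ∘ e) {z | s ≤ g z} ≤ totalEnergyOn u {z | s ≤ g z} :=
    totalEnergyOn_comp_le e
  refine (hf.isMinMaxBound_of_isRitzSystem hG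
    (measurableSet_le measurable_const hg.continuous.measurable) (h.comp e) hμ0
    (fun j => h.monotone (Nat.lt_succ_iff.1 j.2)) (hle.trans hE) hsupp).mono ?_
  have hcoef : 4 * (cutoffConst / (w / 2) ^ 2) + 2 * μ i ≤ (16 * cutoffConst + 2 * M) / w ^ 2 := by
    rw [add_div]
    refine add_le_add (le_of_eq (by field_simp; ring)) ?_
    rw [le_div_iff₀ (by positivity)]
    nlinarith [hμ i]
  have hE0 : 0 ≤ totalEnergyOn (u ∘ e) {z | s ≤ g z} := totalEnergyOn_nonneg
  have hcoef0 : 0 ≤ (16 * cutoffConst + 2 * M) / w ^ 2 :=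
    hcoef.trans' (by linarith [hG])
  gcongr

end Systems

/-! ### Superlinear decay -/

section Decay

open Filter Topology

variable {α A L : ℝ}

-- Since `V j` is controlled by `4 ^ j * E j`, the step is superlinear in `E j`, which beats the
-- growing factor `16 ^ j`.
lemma le_mul_pow_of_superlinear_step {E V : ℕ → ℝ} {D δ θ : ℝ} (hα : 0 < α) (hA : 0 ≤ A)
    (hD : 0 ≤ D) (hθ : 0 ≤ θ) (hθα : (4 * θ) ^ α ≤ 1 / 16) (hδ : 0 ≤ δ)
    (hAδ : A * (D * δ) ^ α ≤ θ / 2) {n : ℕ} (hE : ∀ j, 0 ≤ E j) (hV : ∀ j, 0 ≤ V j)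
    (hE0 : E 0 ≤ δ) (hVE : ∀ j < n, E j ≤ δ * θ ^ j → V j ≤ D * 4 ^ j * E j)
    (hstep : ∀ j < n, E (j + 1) ≤ A * 16 ^ j * V j ^ α * E j + δ * θ ^ (j + 1) / 2) :
    ∀ j ≤ n, E j ≤ δ * θ ^ j := by
  intro j hj
  induction j with
  | zero => simpa using hE0
  | succ j ih =>
    have hEj := ih (by lia)
    have hVj : V j ^ α ≤ (D * δ) ^ α * (1 / 16) ^ j := calc
      V j ^ α ≤ (D * δ * (4 * θ) ^ j) ^ α := by
        refine Real.rpow_le_rpow (hV j) ((hVE j (by lia) hEj).trans ?_) hα.le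
        calc D * 4 ^ j * E j ≤ D * 4 ^ j * (δ * θ ^ j) := by gcongr
          _ = D * δ * (4 * θ) ^ j := by rw [mul_pow]; ring
      _ = (D * δ) ^ α * ((4 * θ) ^ α) ^ j := by
        rw [Real.mul_rpow (by positivity) (by positivity), ← Real.rpow_natCast_mul (by positivity),
          mul_comm (j : ℝ), Real.rpow_mul_natCast (by positivity)]
      _ ≤ (D * δ) ^ α * (1 / 16) ^ j := by gcongr
    calc E (j + 1) ≤ A * 16 ^ j * V j ^ α * E j + δ * θ ^ (j + 1) / 2 := hstep j (by lia)
      _ ≤ A * 16 ^ j * ((D * δ) ^ α * (1 / 16) ^ j) * (δ * θ ^ j) + δ * θ ^ (j + 1) / 2 := by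
        gcongr
        exact hE j
      _ = A * (D * δ) ^ α * (δ * θ ^ j) + δ * θ ^ (j + 1) / 2 := by
        rw [one_div, inv_pow]; field_simp
      _ ≤ θ / 2 * (δ * θ ^ j) + δ * θ ^ (j + 1) / 2 := by gcongr
      _ = δ * θ ^ (j + 1) := by ring

lemma exists_pos_mul_rpow_le (hα : 0 < α) (A D : ℝ) {c : ℝ} (hc : 0 < c) :
    ∃ δ, 0 < δ ∧ δ ≤ 1 / 2 ∧ A * (D * δ) ^ α ≤ c := by
  have hlim : Tendsto (fun δ : ℝ => A * (D * δ) ^ α) (𝓝[>] 0) (𝓝 0) := by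
    have : ContinuousAt (fun δ : ℝ => A * (D * δ) ^ α) 0 :=
      ((continuousAt_const.mul continuousAt_id).rpow_const (Or.inr hα.le)).const_mul A
    simpa [ContinuousAt, Real.zero_rpow hα.ne'] using this.mono_left nhdsWithin_le_nhds
  have hsmall := (hlim.eventually (eventually_le_nhds hc)).and
    (Ioc_mem_nhdsGT (show (0 : ℝ) < 1 / 2 by norm_num))
  obtain ⟨δ, hle, hpos, hhalf⟩ := hsmall.exists
  exact ⟨δ, hpos, hhalf, hle⟩

lemma exists_pos_sq_le_mul_le (L : ℝ) {a b : ℝ} (ha : 0 < a) (hb : 0 < b) :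
    ∃ τ, 0 < τ ∧ τ ≤ 1 ∧ τ ^ 2 ≤ a ∧ L * τ ≤ b := by
  have hlim (f : ℝ → ℝ) (hf : Continuous f) (h0 : f 0 = 0) : Tendsto f (𝓝[>] 0) (𝓝 0) := by
    simpa [h0] using (hf.tendsto 0).mono_left nhdsWithin_le_nhds
  have hsq := (hlim (· ^ 2) (by fun_prop) (by simp)).eventually (eventually_le_nhds ha)
  have hmul := (hlim (L * ·) (by fun_prop) (by simp)).eventually (eventually_le_nhds hb)
  obtain ⟨τ, ⟨hτa, hτb⟩, hpos, hone⟩ := ((hsq.and hmul).and (Ioc_mem_nhdsGT one_pos)).exists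
  exact ⟨τ, hpos, hone, hτa, hτb⟩

lemma exists_pos_rpow_four_mul_eq (hα : 0 < α) :
    ∃ θ : ℝ, 0 < θ ∧ 4 * θ < 1 ∧ (4 * θ) ^ α = 1 / 16 := by
  have hθ : 4 * ((1 / 16 : ℝ) ^ α⁻¹ / 4) = (1 / 16) ^ α⁻¹ := by ring
  refine ⟨(1 / 16) ^ α⁻¹ / 4, by positivity, ?_, ?_⟩
  · exact hθ.trans_lt <| Real.rpow_lt_one (by norm_num) (by norm_num) (inv_pos.2 hα)
  · rw [hθ, Real.rpow_inv_rpow (by norm_num) hα.ne']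

theorem exists_good_index (hα : 0 < α) (hA : 0 ≤ A) (hL : 0 ≤ L) {C κ : ℝ} (hC : 0 ≤ C)
    (hκ : 0 < κ) : ∃ δ, 0 < δ ∧ δ ≤ 1 / 2 ∧ ∀ v, 0 < v → ∃ τ, 0 < τ ∧ τ ≤ 1 ∧
      ∀ E V : ℕ → ℝ, (∀ j, 0 ≤ E j) → (∀ j, v ≤ V j) → E 0 ≤ δ / 2 + L * τ →
        (∀ j, E (j + 1) ≤ A * 16 ^ j * V j ^ α * E j + L * 2 ^ j * τ) →
        ∃ j, E j ≤ δ ∧ τ ^ 2 + C * 4 ^ j * E j ≤ κ * V j := by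
  obtain ⟨θ, hθ0, h4θ1, hθα⟩ := exists_pos_rpow_four_mul_eq hα
  set D : ℝ := 2 * C / κ with hD
  have hD0 : 0 ≤ D := by positivity
  obtain ⟨δ, hδ, hδ1, hAδ⟩ := exists_pos_mul_rpow_le hα A D (half_pos hθ0)
  refine ⟨δ, hδ, hδ1, fun v hv => ?_⟩
  obtain ⟨n, hn⟩ : ∃ n : ℕ, D * δ * (4 * θ) ^ n < v := by
    have hlim := (tendsto_pow_atTop_nhds_zero_of_lt_one (by positivity) h4θ1).const_mul (D * δ)
    rw [mul_zero] at hlim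
    exact (hlim.eventually_lt_const hv).exists
  obtain ⟨τ, hτ, hτ1, hτv, hτL⟩ := exists_pos_sq_le_mul_le (L * 2 ^ n)
    (show 0 < κ * v / 2 by positivity) (show 0 < δ * θ ^ (n + 1) / 2 by positivity)
  refine ⟨τ, hτ, hτ1, fun E V hE hV hE0 hstep => ?_⟩
  have hθle : θ ≤ 1 := by linarith
  have hLτ (j : ℕ) (hj : j ≤ n) : L * 2 ^ j * τ ≤ δ * θ ^ (j + 1) / 2 := calc
    L * 2 ^ j * τ ≤ L * 2 ^ n * τ := by gcongr; norm_num
    _ ≤ δ * θ ^ (n + 1) / 2 := hτL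
    _ ≤ δ * θ ^ (j + 1) / 2 := by
      have := pow_le_pow_of_le_one hθ0.le hθle (Nat.succ_le_succ hj)
      gcongr
  by_contra! hbad
  have hVE (j : ℕ) (hj : E j ≤ δ * θ ^ j) : V j ≤ D * 4 ^ j * E j := by
    have hlt := hbad j (hj.trans (mul_le_of_le_one_right hδ.le (pow_le_one₀ hθ0.le hθle)))
    have hτV : τ ^ 2 ≤ κ * V j / 2 := hτv.trans (by gcongr; exact hV j)
    rw [hD, div_mul_eq_mul_div, div_mul_eq_mul_div, le_div_iff₀ hκ]
    linarith
  have hEn := le_mul_pow_of_superlinear_step hα hA hD0 hθ0.le hθα.le hδ.le hAδ hE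
    (fun j => hv.le.trans (hV j)) (n := n)
    (by
      have := hLτ 0 (Nat.zero_le n)
      simp only [pow_zero, zero_add, pow_one, mul_one] at this
      nlinarith)
    (fun j _ => hVE j)
    (fun j hj => (hstep j).trans (by gcongr; exact hLτ j hj.le)) n le_rfl
  refine hn.not_ge ((hV n).trans ((hVE n hEn).trans ?_))
  calc D * 4 ^ n * E n ≤ D * 4 ^ n * (δ * θ ^ n) := by gcongr
    _ = D * δ * (4 * θ) ^ n := by rw [mul_pow]; ring

end Decay

/-! ### Truncation -/

section Truncation

open scoped ContDiff
open Function (support)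

variable {Ω : Set (EucN N)} {g : EucN N → ℝ} {n : ℕ} {M s w τ : ℝ}

lemma exists_isMinMaxBound (hN : N ≠ 0) (hΩ : IsOpen Ω) (hne : Ω.Nonempty) (n : ℕ) :
    ∃ c, IsMinMaxBound (dirichletForm Ω) n c := by
  have : NeZero N := ⟨hN⟩
  obtain ⟨z, hz⟩ := hne
  have : Infinite Ω := (infinite_of_mem_nhds z (hΩ.mem_nhds hz)).to_subtype
  obtain ⟨x, hx⟩ : ∃ x : Fin n → Ω, Function.Injective x :=
    ⟨_, (Infinite.natEmbedding Ω).injective.comp Fin.val_injective⟩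
  have hbump (i : Fin n) : ∃ v : TestSpace Ω, ∀ j, v (x j) = if i = j then 1 else 0 := by
    have hopen : IsOpen (Ω \ ((fun j => (x j : EucN N)) '' {i}ᶜ)) :=
      hΩ.sdiff ((toFinite {i}ᶜ).image _).isClosed
    have hmem : (x i : EucN N) ∈ Ω \ ((fun j => (x j : EucN N)) '' {i}ᶜ) :=
      ⟨(x i).2, by rintro ⟨j, hj, hji⟩; exact hj (hx (Subtype.ext hji))⟩
    obtain ⟨f, hf, hfc, hfd, -, hfx⟩ :=
      exists_contDiff_tsupport_subset (n := ⊤) (hopen.mem_nhds hmem)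
    refine ⟨⟨f, hfd, hfc, hf.trans sdiff_subset⟩, fun j => ?_⟩
    split_ifs with hij
    · exact hij ▸ hfx
    · exact image_eq_zero_of_notMem_tsupport fun hj => (hf hj).2 ⟨j, Ne.symm hij, rfl⟩
  choose v hv using hbump
  refine exists_isMinMaxBound_of_linearIndependent dirichletForm_isPosSemidef.isSymm (w := v) ?_
  refine Fintype.linearIndependent_iff.2 fun β hβ j => ?_
  have heval : (∑ i, β i • v i) (x j) = 0 := DFunLike.congr_fun hβ (x j : EucN N)
  simpa [TestSpace.sum_smul_apply, hv] using heval

lemma IsMinMaxBound.one_le_faberKrahnConst_mul (hN : 2 ≤ N) {t c : ℝ} (ht : 0 ≤ t)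
    (hvol : volume Ω ≤ ENNReal.ofReal t) (h : IsMinMaxBound (dirichletForm Ω) (n + 1) c) :
    1 ≤ faberKrahnConst N * t ^ ((2 : ℝ) / N) * c := by
  obtain ⟨v, hv0, hv⟩ := h.exists_ne_zero
  have hpos : 0 < ‖v‖ ^ 2 := by positivity
  have hsupp : support v ⊆ Ω := (subset_tsupport v).trans v.tsupport_subset
  have hFK := integral_sq_le_faberKrahnConst_mul hN v ht ((measure_mono hsupp).trans hvol)
  rw [← TestSpace.norm_sq_eq, ← dirichletForm_self] at hFK
  have hC : 0 ≤ faberKrahnConst N * t ^ ((2 : ℝ) / N) :=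
    mul_nonneg faberKrahnConst_pos.le (Real.rpow_nonneg ht _)
  refine le_of_mul_le_mul_right ?_ hpos
  rw [one_mul, mul_assoc]
  exact hFK.trans (mul_le_mul_of_nonneg_left hv hC)

section Decay

variable {u : Fin n → TestSpace Ω} {μ : Fin n → ℝ}

lemma IsApproxEigensystem.totalEnergyOn_superlevel_le_volume (hN : 2 ≤ N) (hΩ : volume Ω ≠ ⊤)
    (hg : ContDiff ℝ ∞ g) (hg1 : LipschitzWith 1 g)
    (h : IsApproxEigensystem (dirichletForm Ω) (τ ^ 2) u μ) (hμ : ∀ j, μ j ≤ M) (hτ : 0 ≤ τ)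
    (hw : 0 < w) (hw1 : w ≤ 1) :
    totalEnergyOn u {z | s + 2 * w ≤ g z} ≤
      decayConst M / w ^ 4 * (faberKrahnConst N * volume.real (Ω ∩ {z | s ≤ g z}) ^ ((2 : ℝ) / N)) *
        totalEnergyOn u {z | s ≤ g z} + defectConst n M / w * τ := by
  have hP0 : 0 ≤ faberKrahnConst N * volume.real (Ω ∩ {z | s ≤ g z}) ^ ((2 : ℝ) / N) :=
    mul_nonneg faberKrahnConst_pos.le (Real.rpow_nonneg measureReal_nonneg _)
  have key := h.totalEnergyOn_superlevel_le hg hg1 hμ (sq_nonneg τ) hw hw1 (s := s) hP0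
    fun v hv => ?_
  · rwa [Real.sqrt_sq hτ] at key
  have hfin : volume (Ω ∩ {z | s ≤ g z}) ≠ ⊤ := measure_ne_top_of_subset inter_subset_left hΩ
  have hFK := integral_sq_le_faberKrahnConst_mul hN v measureReal_nonneg
    ((measure_mono hv).trans_eq (ofReal_measureReal hfin).symm)
  rw [← TestSpace.norm_sq_eq, ← dirichletForm_self] at hFK
  exact hFK.trans (mul_le_mul_of_nonneg_left (le_add_of_nonneg_right (sq_nonneg _)) hP0)

lemma IsApproxEigensystem.totalEnergyOn_superlevel_le_local (hN : 2 ≤ N) (hg : ContDiff ℝ ∞ g)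
    (hg1 : LipschitzWith 1 g) (h : IsApproxEigensystem (dirichletForm Ω) (τ ^ 2) u μ)
    (hμ : ∀ j, μ j ≤ M) (hM : 0 ≤ M) (hτ : 0 ≤ τ) {m : ℝ} (hm : 0 ≤ m)
    (hloc : ∀ y, volume (Ω ∩ {z | s ≤ g z} ∩ Metric.ball y 1) ≤ ENNReal.ofReal m) :
    totalEnergyOn u {z | s + 2 ≤ g z} ≤
      decayConst M * localFaberKrahnConst N * (n * (1 + M)) * m ^ ((2 : ℝ) / N) +
        defectConst n M * τ := by
  have hP0 : 0 ≤ localFaberKrahnConst N * m ^ ((2 : ℝ) / N) :=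
    mul_nonneg localFaberKrahnConst_pos.le (Real.rpow_nonneg hm _)
  have key := h.totalEnergyOn_superlevel_le hg hg1 hμ (sq_nonneg τ) one_pos le_rfl (s := s) hP0
    fun v hv => ?_
  · have hdecay : 0 ≤ decayConst M := by unfold decayConst; positivity
    simp only [mul_one, one_pow, div_one, Real.sqrt_sq hτ] at key
    refine key.trans (add_le_add_left ?_ _)
    calc decayConst M * (localFaberKrahnConst N * m ^ ((2 : ℝ) / N)) * totalEnergyOn u {z | s ≤ g z}
        ≤ decayConst M * (localFaberKrahnConst N * m ^ ((2 : ℝ) / N)) * (n * (1 + M)) := by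
          gcongr
          exact h.totalEnergyOn_le hμ
      _ = _ := by ring
  · rw [TestSpace.norm_sq_eq, dirichletForm_self]
    refine integral_sq_le_localFaberKrahnConst_mul hN v hm fun y => (measure_mono ?_).trans (hloc y)
    exact inter_subset_inter_left _ hv

lemma IsApproxEigensystem.totalEnergyOn_dyadic_le (hN : 2 ≤ N) (hΩ : volume Ω ≠ ⊤)
    (hg : ContDiff ℝ ∞ g) (hg1 : LipschitzWith 1 g)
    (h : IsApproxEigensystem (dirichletForm Ω) (τ ^ 2) u μ) (hμ : ∀ j, μ j ≤ M) (hM : 0 ≤ M)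
    (hτ : 0 ≤ τ) (j : ℕ) :
    totalEnergyOn u {z | 12 - 6 * (1 / 2) ^ (j + 1) ≤ g z} ≤
      decayConst M * faberKrahnConst N * 16 ^ j *
        volume.real (Ω ∩ {z | 12 - 5 * (1 / 2) ^ j ≤ g z}) ^ ((2 : ℝ) / N) *
        totalEnergyOn u {z | 12 - 6 * (1 / 2) ^ j ≤ g z} + defectConst n M * 2 ^ j * τ := by
  have hw : (0 : ℝ) < (1 / 2) ^ j := by positivity
  have hstep := h.totalEnergyOn_superlevel_le_volume hN hΩ hg hg1 hμ hτ hw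
    (pow_le_one₀ (by norm_num) (by norm_num)) (s := 12 - 5 * (1 / 2) ^ j)
  have hlevel : 12 - 5 * (1 / 2 : ℝ) ^ j + 2 * (1 / 2) ^ j = 12 - 6 * (1 / 2) ^ (j + 1) := by ring
  have h16 : decayConst M / ((1 / 2) ^ j) ^ 4 = decayConst M * 16 ^ j := by
    rw [← pow_mul, mul_comm j, pow_mul]
    norm_num [div_eq_mul_inv, ← inv_pow]
  have h2 : defectConst n M / (1 / 2) ^ j = defectConst n M * 2 ^ j := by
    norm_num [div_eq_mul_inv, ← inv_pow]
  rw [hlevel, h16, h2] at hstep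
  have hdecay : 0 ≤ decayConst M := by unfold decayConst; positivity
  have hFK := (faberKrahnConst_pos (N := N)).le
  refine hstep.trans (add_le_add_left ?_ _)
  calc _ ≤ decayConst M * 16 ^ j * (faberKrahnConst N *
          volume.real (Ω ∩ {z | 12 - 5 * (1 / 2) ^ j ≤ g z}) ^ ((2 : ℝ) / N)) *
        totalEnergyOn u {z | 12 - 6 * (1 / 2) ^ j ≤ g z} := by
        gcongr
        refine totalEnergyOn_mono fun z hz => ?_
        exact (by linarith : 12 - 6 * (1 / 2) ^ j ≤ 12 - 5 * (1 / 2 : ℝ) ^ j).trans hz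
    _ = _ := by ring

end Decay

lemma exists_totalEnergyOn_superlevel_le (hN : 2 ≤ N) (n : ℕ) (hM : 0 ≤ M) {C κ : ℝ} (hC : 0 ≤ C)
    (hκ : 0 < κ) :
    ∃ m, 0 < m ∧ ∀ v, 0 < v → ∃ τ, 0 < τ ∧ τ ≤ 1 ∧
      ∀ (Ω : Set (EucN N)) (g : EucN N → ℝ) (u : Fin n → TestSpace Ω) (μ : Fin n → ℝ),
        volume Ω ≠ ⊤ → ContDiff ℝ ∞ g → LipschitzWith 1 g →
        (∀ y, volume (Ω ∩ {z | 4 ≤ g z} ∩ Metric.ball y 1) ≤ ENNReal.ofReal m) →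
        v ≤ volume.real (Ω ∩ {z | 12 ≤ g z}) →
        IsApproxEigensystem (dirichletForm Ω) (τ ^ 2) u μ → (∀ j, μ j ≤ M) →
        ∃ w, 0 < w ∧ w ≤ 1 ∧ totalEnergyOn u {z | 12 - 6 * w ≤ g z} ≤ 1 / 2 ∧
          τ ^ 2 + C / w ^ 2 * totalEnergyOn u {z | 12 - 6 * w ≤ g z} ≤
            κ * volume.real (Ω ∩ {z | 12 - 5 * w ≤ g z}) := by
  have hα : 0 < (2 : ℝ) / N := by positivity
  have hdecay : 0 ≤ decayConst M := by unfold decayConst; positivity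
  obtain ⟨δ, hδ, hδ1, hgood⟩ := exists_good_index hα
    (mul_nonneg hdecay (faberKrahnConst_pos (N := N)).le) (defectConst_nonneg (n := n) (M := M))
    hC hκ
  obtain ⟨m, hm, -, hmδ⟩ := exists_pos_mul_rpow_le hα
    (decayConst M * localFaberKrahnConst N * (n * (1 + M))) 1 (half_pos hδ)
  rw [one_mul] at hmδ
  refine ⟨m, hm, fun v hv => ?_⟩
  obtain ⟨τ, hτ, hτ1, hindex⟩ := hgood v hv
  refine ⟨τ, hτ, hτ1, fun Ω g u μ hΩ hg hg1 hloc hvol h hμ => ?_⟩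
  have hw0 (j : ℕ) : (0 : ℝ) < (1 / 2) ^ j := by positivity
  have hV (j : ℕ) : v ≤ volume.real (Ω ∩ {z | 12 - 5 * (1 / 2) ^ j ≤ g z}) :=
    hvol.trans (measureReal_mono (inter_subset_inter_right _ fun z hz =>
      (by linarith [hw0 j] : 12 - 5 * (1 / 2 : ℝ) ^ j ≤ 12).trans hz)
      (measure_ne_top_of_subset inter_subset_left hΩ))
  have hE0 := h.totalEnergyOn_superlevel_le_local hN hg hg1 hμ hM hτ.le hm.le hloc
  obtain ⟨j, hj, hjκ⟩ := hindex (fun j => totalEnergyOn u {z | 12 - 6 * (1 / 2) ^ j ≤ g z}) _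
    (fun j => totalEnergyOn_nonneg) hV (by norm_num at hE0 ⊢; linarith)
    (h.totalEnergyOn_dyadic_le hN hΩ hg hg1 hμ hM hτ.le)
  refine ⟨(1 / 2) ^ j, hw0 j, pow_le_one₀ (by norm_num) (by norm_num), hj.trans hδ1, ?_⟩
  have h4 : C / ((1 / 2) ^ j) ^ 2 = C * 4 ^ j := by
    rw [← pow_mul, mul_comm j, pow_mul]
    norm_num [div_eq_mul_inv, ← inv_pow]
  rwa [h4]

lemma exists_sublevel_isMinMaxBound (hN : 2 ≤ N) (n : ℕ) (hM : 0 ≤ M) {κ : ℝ} (hκ : 0 < κ) :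
    ∃ m, 0 < m ∧ ∀ (Ω : Set (EucN N)) (g : EucN N → ℝ), IsOpen Ω → volume Ω ≠ ⊤ →
      (∀ i : Fin n, eigenvalE Ω (i + 1) ≤ M) → ContDiff ℝ ∞ g → LipschitzWith 1 g →
      (∀ y, volume (Ω ∩ {z | 4 ≤ g z} ∩ Metric.ball y 1) ≤ ENNReal.ofReal m) →
      0 < volume.real (Ω ∩ {z | 12 ≤ g z}) →
      ∃ s ≤ 12, ∀ i : Fin n, IsMinMaxBound (dirichletForm (Ω ∩ {z | g z < s})) (i + 1)
        (eigenvalE Ω (i + 1) + κ * volume.real (Ω ∩ {z | s ≤ g z})) := by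
  have hC : 0 ≤ 16 * cutoffConst + 2 * (M + 1) := by linarith [one_le_cutoffConst]
  obtain ⟨m, hm, hlevel⟩ := exists_totalEnergyOn_superlevel_le hN n (by linarith : 0 ≤ M + 1) hC hκ
  refine ⟨m, hm, fun Ω g hΩ hfin hM hg hg1 hloc hpos => ?_⟩
  obtain ⟨τ, hτ, hτ1, hsystem⟩ := hlevel _ hpos
  have hne : Ω.Nonempty := by
    by_contra hempty
    simp [not_nonempty_iff_eq_empty.1 hempty] at hpos
  obtain ⟨u, μ, h⟩ := exists_isApproxEigensystem dirichletForm_isPosSemidef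
    (exists_isMinMaxBound (by lia) hΩ hne n) (by positivity : 0 < τ ^ 2)
  have hμ (i : Fin n) : μ i ≤ eigenvalE Ω (i + 1) + τ ^ 2 :=
    eigenvalE_eq_minMaxValue Ω _ ▸ h.le_add i
  have hμM (i : Fin n) : μ i ≤ M + 1 :=
    (hμ i).trans (add_le_add (hM i) (pow_le_one₀ hτ.le hτ1))
  obtain ⟨w, hw, hw1, hE, hκE⟩ := hsystem Ω g u μ hfin hg hg1 hloc le_rfl h hμM
  refine ⟨12 - 5 * w, by linarith, fun i => ?_⟩
  have hs : 12 - 6 * w + w = 12 - 5 * w := by ring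
  refine hs ▸ (h.isMinMaxBound_sublevel hg hg1 hμM hw hw1 hE i).mono ?_
  rw [hs]
  linarith [hμ i]

lemma add_mul_mul_one_sub_rpow_le {α a l m : ℝ} (hα : 0 ≤ α) (hα1 : α ≤ 1) (ha : 0 ≤ a)
    (hal : a ≤ l) (hm : 0 ≤ m) (hm1 : m ≤ 1) : (l + α * a * m) * (1 - m) ^ α ≤ l := calc
  (l + α * a * m) * (1 - m) ^ α ≤ (l + α * l * m) * (1 - α * m) := by
    have hbernoulli := rpow_one_add_le_one_add_mul_self (by linarith : -1 ≤ -m) hα hα1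
    rw [← sub_eq_add_neg, mul_neg, ← sub_eq_add_neg] at hbernoulli
    have : 0 ≤ l := ha.trans hal
    gcongr
  _ = l - l * (α * m) ^ 2 := by ring
  _ ≤ l := sub_le_self _ (mul_nonneg (ha.trans hal) (sq_nonneg _))

lemma one_le_faberKrahnConst_mul_eigenvalE (hN : 2 ≤ N) (hΩ : volume Ω ≠ ⊤)
    (h : ∃ c, IsMinMaxBound (dirichletForm Ω) (n + 1) c) :
    1 ≤ faberKrahnConst N * volume.real Ω ^ ((2 : ℝ) / N) * eigenvalE Ω (n + 1) := by
  have hbound (c : ℝ) (hc : IsMinMaxBound (dirichletForm Ω) (n + 1) c) :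
      1 ≤ faberKrahnConst N * volume.real Ω ^ ((2 : ℝ) / N) * c :=
    hc.one_le_faberKrahnConst_mul hN measureReal_nonneg (ofReal_measureReal hΩ).ge
  have hpos : 0 < faberKrahnConst N * volume.real Ω ^ ((2 : ℝ) / N) := by
    have : 0 ≤ faberKrahnConst N * volume.real Ω ^ ((2 : ℝ) / N) :=
      mul_nonneg faberKrahnConst_pos.le (by positivity)
    obtain ⟨c, hc⟩ := h
    refine this.lt_of_ne' fun hzero => ?_
    linarith [hzero ▸ hbound c hc]
  rw [eigenvalE_eq_minMaxValue, ← inv_le_iff_one_le_mul₀' hpos]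
  exact le_csInf h fun c hc => (inv_le_iff_one_le_mul₀' hpos).2 (hbound c hc)

lemma inv_faberKrahnConst_le_eigenvalE (hN : 2 ≤ N) (hΩ : IsOpen Ω) (hvol : volume Ω = 1) (n : ℕ) :
    (faberKrahnConst N)⁻¹ ≤ eigenvalE Ω (n + 1) := by
  have hne : Ω.Nonempty := nonempty_of_measure_ne_zero (hvol ▸ one_ne_zero)
  have h := one_le_faberKrahnConst_mul_eigenvalE hN (by simp [hvol])
    (exists_isMinMaxBound (by lia) hΩ hne (n + 1))
  rw [Measure.real, hvol, ENNReal.toReal_one, Real.one_rpow, mul_one] at h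
  exact (inv_le_iff_one_le_mul₀' faberKrahnConst_pos).2 h

lemma le_of_measureReal_superlevel_eq_zero (hΩ : IsOpen Ω) (hfin : volume Ω ≠ ⊤)
    (hg : Continuous g) (hzero : volume.real (Ω ∩ {z | s ≤ g z}) = 0) {z : EucN N} (hz : z ∈ Ω) :
    g z ≤ s := by
  by_contra! hlt
  have hopen : IsOpen (Ω ∩ {z | s < g z}) := hΩ.inter (isOpen_lt continuous_const hg)
  refine (hopen.measure_pos volume ⟨z, hz, hlt⟩).ne' (measure_mono_null ?_
    ((measureReal_eq_zero_iff (measure_ne_top_of_subset inter_subset_left hfin)).1 hzero))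
  exact inter_subset_inter_right _ fun y (hy : s < g y) => hy.le

lemma measureReal_sublevel (hfin : volume Ω ≠ ⊤) (hg : Continuous g) :
    volume.real (Ω ∩ {z | g z < s}) = volume.real Ω - volume.real (Ω ∩ {z | s ≤ g z}) := by
  have hmeas : MeasurableSet {z | s ≤ g z} := measurableSet_le measurable_const hg.measurable
  rw [eq_sub_iff_add_eq', ← measureReal_inter_add_sdiff hmeas hfin]
  congr 2
  ext z
  simp

theorem exists_truncation (hN : 2 ≤ N) (k : ℕ) {K : ℝ} (hK : 0 < K) :
    ∃ m, 0 < m ∧ ∀ (Ω : Set (EucN N)) (g : EucN N → ℝ), IsOpen Ω → volume Ω = 1 →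
      eigenvalE Ω k ≤ K → ContDiff ℝ ∞ g → LipschitzWith 1 g →
      (∀ y, volume (Ω ∩ {z | 4 ≤ g z} ∩ Metric.ball y 1) ≤ ENNReal.ofReal m) →
      ∃ Ω' ⊆ Ω, IsOpen Ω' ∧ (∀ z ∈ Ω', g z ≤ 12) ∧ ∀ i : Fin k,
        (∃ c, IsMinMaxBound (dirichletForm Ω') (i + 1) c) ∧ eigenvalE Ω' (i + 1) ≤ 2 * K ∧
        eigenvalE Ω' (i + 1) * volume.real Ω' ^ ((2 : ℝ) / N) ≤ eigenvalE Ω (i + 1) := by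
  have hα0 : 0 < (2 : ℝ) / N := by positivity
  have hα1 : (2 : ℝ) / N ≤ 1 := div_le_one_of_le₀ (by exact_mod_cast hN) (by positivity)
  have ha : 0 < (faberKrahnConst N)⁻¹ := inv_pos.2 faberKrahnConst_pos
  obtain ⟨m, hm, hsub⟩ := exists_sublevel_isMinMaxBound hN k hK.le (mul_pos hα0 ha)
  refine ⟨m, hm, fun Ω g hΩ hvol hlam hg hg1 hloc => ?_⟩
  have hne : Ω.Nonempty := nonempty_of_measure_ne_zero (hvol ▸ one_ne_zero)
  have hfin : volume Ω ≠ ⊤ := hvol ▸ ENNReal.one_ne_top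
  have hΩ1 : volume.real Ω = 1 := by simp [Measure.real, hvol]
  have hex := exists_isMinMaxBound (by lia) hΩ hne
  have hKi (i : Fin k) : eigenvalE Ω (i + 1) ≤ K := by
    rw [eigenvalE_eq_minMaxValue] at hlam ⊢
    exact (minMaxValue_mono dirichletForm_isPosSemidef.isNonneg i.2 (hex k)).trans hlam
  by_cases hzero : volume.real (Ω ∩ {z | 12 ≤ g z}) = 0
  · exact ⟨Ω, Subset.rfl, hΩ, fun z => le_of_measureReal_superlevel_eq_zero hΩ hfin hg.continuous
      hzero, fun i => ⟨hex _, by linarith [hKi i], by simp [hΩ1]⟩⟩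
  obtain ⟨s, hs, hbound⟩ := hsub Ω g hΩ hfin hKi hg hg1 hloc
    (measureReal_nonneg.lt_of_ne' hzero)
  refine ⟨Ω ∩ {z | g z < s}, inter_subset_left,
    hΩ.inter (isOpen_lt hg.continuous continuous_const), fun z hz => (le_of_lt hz.2).trans hs,
    fun i => ⟨⟨_, hbound i⟩, ?_⟩⟩
  have hle := minMaxValue_le dirichletForm_isPosSemidef.isNonneg (hbound i)
  rw [← eigenvalE_eq_minMaxValue] at hle
  have hal := inv_faberKrahnConst_le_eigenvalE hN hΩ hvol i
  have hm0 : 0 ≤ volume.real (Ω ∩ {z | s ≤ g z}) := measureReal_nonneg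
  have hm1 : volume.real (Ω ∩ {z | s ≤ g z}) ≤ 1 := hΩ1 ▸ measureReal_mono inter_subset_left hfin
  constructor
  · have := mul_le_one₀ hα1 hm0 hm1
    nlinarith [hKi i]
  · rw [measureReal_sublevel hfin hg.continuous, hΩ1]
    exact (mul_le_mul_of_nonneg_right hle (Real.rpow_nonneg (sub_nonneg.2 hm1) _)).trans
      (add_mul_mul_one_sub_rpow_le hα0.le hα1 ha.le hal hm0 hm1)

end Truncation

/-! ### Covering by finitely many balls -/

section Covering

open Metric
open scoped NNReal

lemma encard_mul_le_of_isSeparated {X : Type*} [PseudoMetricSpace X] [MeasurableSpace X]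
    [OpensMeasurableSpace X] (μ : Measure X) {r : ℝ≥0} {m : ℝ≥0∞} {C : Set X}
    (hC : ∀ x ∈ C, m ≤ μ (ball x r)) (hsep : IsSeparated (2 * r : ℝ≥0) C) :
    C.encard * m ≤ μ univ := by
  have hdisj : Pairwise (Function.onFun Disjoint fun x : C => ball (x : X) r) := by
    intro x y hxy
    refine ball_disjoint_ball ?_
    have hlt : (2 * r : ℝ≥0) < edist (x : X) y := hsep x.2 y.2 (Subtype.coe_ne_coe.2 hxy)
    rw [edist_nndist, ENNReal.coe_lt_coe, ← NNReal.coe_lt_coe] at hlt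
    rw [← two_mul]
    exact_mod_cast hlt.le
  calc C.encard * m = ∑' _ : C, m := by rw [ENNReal.tsum_const]; rfl
    _ ≤ ∑' x : C, μ (ball (x : X) r) := ENNReal.tsum_le_tsum fun x => hC x x.2
    _ ≤ μ (⋃ x : C, ball (x : X) r) :=
        tsum_meas_le_meas_iUnion_of_disjoint μ (fun _ => isOpen_ball.measurableSet) hdisj
    _ ≤ μ univ := measure_mono (subset_univ _)

lemma exists_finset_forall_lt_measure_ball {X : Type*} [PseudoMetricSpace X] [MeasurableSpace X]
    [OpensMeasurableSpace X] (μ : Measure X) [IsFiniteMeasure μ] (r : ℝ≥0) {m : ℝ≥0∞}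
    (hm : m ≠ 0) :
    ∃ T : Finset X, T.card * m ≤ μ univ ∧
      ∀ x, m < μ (ball x r) → ∃ y ∈ T, dist x y ≤ 2 * r := by
  set A : Set X := {x | m < μ (ball x r)}
  have hpack : ∀ C ⊆ A, IsSeparated (2 * r : ℝ≥0) C → C.encard * m ≤ μ univ :=
    fun C hCA hsep => encard_mul_le_of_isSeparated μ (fun x hx => (hCA hx).le) hsep
  have hfin : packingNumber (2 * r) A ≠ ⊤ := by
    obtain ⟨n, hn⟩ := ENNReal.exists_nat_gt (ENNReal.div_ne_top (measure_ne_top μ univ) hm)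
    refine ne_top_of_le_ne_top (ENat.natCast_ne_top n)
      (iSup₂_le fun C hCA => iSup_le fun hsep => ?_)
    have hle := (ENNReal.le_div_iff_mul_le (.inl hm) (.inr (measure_ne_top μ univ))).2
      (hpack C hCA hsep)
    exact_mod_cast hle.trans hn.le
  have hTfin : (maximalSeparatedSet (2 * r) A).Finite := by
    rw [← encard_ne_top_iff, encard_maximalSeparatedSet hfin]
    exact hfin
  refine ⟨hTfin.toFinset, ?_, fun x hx => ?_⟩
  · have := hpack _ maximalSeparatedSet_subset isSeparated_maximalSeparatedSet
    rwa [hTfin.encard_eq_coe_toFinset_card] at this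
  · have hcover := isCover_iff_subset_iUnion_closedBall.1 (isCover_maximalSeparatedSet hfin) hx
    simpa using hcover

end Covering

section SoftDistance

open Metric
open scoped NNReal
open scoped ContDiff

variable {E : Type*} [NormedAddCommGroup E]

lemma norm_le_sqrt_one_add_norm_sq (x : E) : ‖x‖ ≤ √(1 + ‖x‖ ^ 2) :=
  Real.le_sqrt_of_sq_le (by linarith)

lemma sqrt_one_add_norm_sq_le_one_add (x : E) : √(1 + ‖x‖ ^ 2) ≤ 1 + ‖x‖ :=
  Real.sqrt_le_iff.2 ⟨by positivity, by nlinarith [norm_nonneg x]⟩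

lemma sqrt_one_add_norm_sq_le_add (x y : E) :
    √(1 + ‖x‖ ^ 2) ≤ √(1 + ‖y‖ ^ 2) + ‖x - y‖ := by
  refine Real.sqrt_le_iff.2 ⟨by positivity, ?_⟩
  have hsq : √(1 + ‖y‖ ^ 2) ^ 2 = 1 + ‖y‖ ^ 2 := Real.sq_sqrt (by positivity)
  have hcross : ‖y‖ * ‖x - y‖ ≤ √(1 + ‖y‖ ^ 2) * ‖x - y‖ := by
    gcongr
    exact norm_le_sqrt_one_add_norm_sq y
  have htriangle : ‖x‖ ^ 2 ≤ (‖y‖ + ‖x - y‖) ^ 2 := by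
    gcongr
    exact norm_le_norm_add_norm_sub' x y
  nlinarith

/-- A smooth substitute for the distance to the finite set `T`: the soft minimum over `y ∈ T` of
the smoothed distances `√(1 + ‖x - y‖²)`. It is off by at most `1 + log #T`. -/
def softDist (T : Finset E) (x : E) : ℝ := -Real.log (∑ y ∈ T, Real.exp (-√(1 + ‖x - y‖ ^ 2)))

variable {T : Finset E}

lemma sum_exp_pos {ι : Type*} {T : Finset ι} (hT : T.Nonempty) (f : ι → ℝ) :
    0 < ∑ y ∈ T, Real.exp (f y) :=
  Finset.sum_pos (fun _ _ => Real.exp_pos _) hT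

lemma contDiff_softDist {E : Type*} [NormedAddCommGroup E] [InnerProductSpace ℝ E] {T : Finset E}
    (hT : T.Nonempty) : ContDiff ℝ ∞ (softDist T) := by
  refine (ContDiff.log (ContDiff.sum fun y _ => ?_) fun x => (sum_exp_pos hT _).ne').neg
  refine (ContDiff.sqrt ?_ fun x => by positivity).neg.exp
  exact contDiff_const.add ((contDiff_id.sub contDiff_const).norm_sq ℝ)

lemma lipschitzWith_softDist (hT : T.Nonempty) : LipschitzWith 1 (softDist T) := by
  refine LipschitzWith.of_le_add fun x x' => ?_
  have hsum : Real.exp (-dist x x') * ∑ y ∈ T, Real.exp (-√(1 + ‖x' - y‖ ^ 2)) ≤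
      ∑ y ∈ T, Real.exp (-√(1 + ‖x - y‖ ^ 2)) := by
    rw [Finset.mul_sum]
    refine Finset.sum_le_sum fun y _ => ?_
    rw [← Real.exp_add, Real.exp_le_exp]
    have := sqrt_one_add_norm_sq_le_add (x - y) (x' - y)
    rw [sub_sub_sub_cancel_right, ← dist_eq_norm x x'] at this
    linarith
  have hpos := sum_exp_pos hT fun y => -√(1 + ‖x' - y‖ ^ 2)
  have hlog := Real.log_le_log (mul_pos (Real.exp_pos _) hpos) hsum
  rw [Real.log_mul (Real.exp_pos _).ne' hpos.ne', Real.log_exp] at hlog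
  rw [softDist, softDist]
  linarith

lemma softDist_le {y : E} (hy : y ∈ T) (x : E) : softDist T x ≤ 1 + dist x y := by
  have hle : Real.exp (-√(1 + ‖x - y‖ ^ 2)) ≤ ∑ y ∈ T, Real.exp (-√(1 + ‖x - y‖ ^ 2)) :=
    Finset.single_le_sum (f := fun y => Real.exp (-√(1 + ‖x - y‖ ^ 2)))
      (fun _ _ => (Real.exp_pos _).le) hy
  have hlog := Real.log_le_log (Real.exp_pos _) hle
  rw [Real.log_exp] at hlog
  have := sqrt_one_add_norm_sq_le_one_add (x - y)
  rw [softDist, dist_eq_norm]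
  linarith

lemma exists_dist_le_softDist_add_log (hT : T.Nonempty) (x : E) :
    ∃ y ∈ T, dist x y ≤ softDist T x + Real.log T.card := by
  by_contra! hfar
  have hcard : (0 : ℝ) < T.card := by exact_mod_cast hT.card_pos
  have hlt : ∑ y ∈ T, Real.exp (-√(1 + ‖x - y‖ ^ 2)) <
      ∑ _y ∈ T, Real.exp (-(softDist T x + Real.log T.card)) := by
    refine Finset.sum_lt_sum_of_nonempty hT fun y hy => Real.exp_lt_exp.2 (neg_lt_neg ?_)
    exact (hfar y hy).trans_le ((dist_eq_norm x y).trans_le (norm_le_sqrt_one_add_norm_sq _))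
  have hsum : ∑ y ∈ T, Real.exp (-√(1 + ‖x - y‖ ^ 2)) = Real.exp (-softDist T x) := by
    rw [softDist, neg_neg, Real.exp_log (sum_exp_pos hT _)]
  rw [hsum, Finset.sum_const, nsmul_eq_mul, neg_add, Real.exp_add, Real.exp_neg (Real.log _),
    Real.exp_log hcard] at hlt
  field_simp at hlt
  exact lt_irrefl _ hlt

lemma exists_softDist_control (N : ℕ) {m : ℝ} (hm : 0 < m) :
    ∃ M : ℕ, ∀ Ω : Set (EucN N), volume Ω = 1 → ∃ T : Finset (EucN N), T.Nonempty ∧ T.card ≤ M ∧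
      ∀ z, volume (Ω ∩ {x | 4 ≤ softDist T x} ∩ ball z 1) ≤ ENNReal.ofReal m := by
  classical
  obtain ⟨M, hM⟩ := exists_nat_ge (1 / m)
  refine ⟨M + 1, fun Ω hΩ => ?_⟩
  have : IsFiniteMeasure (volume.restrict Ω) := ⟨by simp [hΩ]⟩
  obtain ⟨T, hTcard, hT⟩ := exists_finset_forall_lt_measure_ball (volume.restrict Ω) 1
    (ENNReal.ofReal_pos.2 hm).ne'
  have hTM : T.card ≤ M := by
    rw [Measure.restrict_apply_univ, hΩ, ← ENNReal.ofReal_natCast,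
      ← ENNReal.ofReal_mul (by positivity), ENNReal.ofReal_le_one, ← le_div_iff₀ hm] at hTcard
    exact_mod_cast hTcard.trans hM
  refine ⟨insert 0 T, Finset.insert_nonempty _ _, (Finset.card_insert_le _ _).trans (by omega),
    fun z => ?_⟩
  by_cases hz : ENNReal.ofReal m < volume.restrict Ω (ball z (1 : ℝ≥0))
  · obtain ⟨y, hy, hzy⟩ := hT z hz
    suffices h : Ω ∩ {x | 4 ≤ softDist (insert 0 T) x} ∩ ball z 1 = ∅ by simp [h]
    refine eq_empty_iff_forall_notMem.2 fun x hx => ?_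
    have hfar : 4 ≤ softDist (insert 0 T) x := hx.1.2
    have hxz : dist x z < 1 := hx.2
    have hnear := softDist_le (Finset.mem_insert_of_mem hy : y ∈ insert 0 T) x
    have := dist_triangle x z y
    norm_num at hzy
    linarith
  · rw [not_lt, Measure.restrict_apply isOpen_ball.measurableSet, NNReal.coe_one] at hz
    refine (measure_mono ?_).trans hz
    exact fun x hx => ⟨hx.2, hx.1.1⟩

lemma exists_subset_iUnion_ball (hN : 2 ≤ N) (k : ℕ) {K : ℝ} (hK : 0 < K) :
    ∃ M : ℕ, ∃ ρ > 0, ∀ Ω : Set (EucN N), IsOpen Ω → volume Ω = 1 → eigenvalE Ω k ≤ K →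
      ∃ Ω' ⊆ Ω, IsOpen Ω' ∧
        (∃ T : Finset (EucN N), T.card ≤ M ∧ Ω' ⊆ ⋃ y ∈ T, ball y ρ) ∧
        ∀ i : Fin k, (∃ c, IsMinMaxBound (dirichletForm Ω') (i + 1) c) ∧
          eigenvalE Ω' (i + 1) ≤ 2 * K ∧
          eigenvalE Ω' (i + 1) * volume.real Ω' ^ ((2 : ℝ) / N) ≤ eigenvalE Ω (i + 1) := by
  obtain ⟨m, hm, htrunc⟩ := exists_truncation hN k hK
  obtain ⟨M, hM⟩ := exists_softDist_control N hm
  have hlogM : 0 ≤ Real.log M := Real.log_natCast_nonneg M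
  refine ⟨M, 13 + Real.log M, by linarith, fun Ω hΩ hvol hlam => ?_⟩
  obtain ⟨T, hT, hTM, hsmall⟩ := hM Ω hvol
  obtain ⟨Ω', hsub, hopen, hle, hspec⟩ := htrunc Ω (softDist T) hΩ hvol hlam
    (contDiff_softDist hT) (lipschitzWith_softDist hT) hsmall
  refine ⟨Ω', hsub, hopen, ⟨T, hTM, fun x hx => ?_⟩, hspec⟩
  obtain ⟨y, hy, hxy⟩ := exists_dist_le_softDist_add_log hT x
  have hlog : Real.log T.card ≤ Real.log M :=
    Real.log_le_log (by exact_mod_cast hT.card_pos) (by exact_mod_cast hTM)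
  exact mem_biUnion hy (mem_ball.2 (by linarith [hle x hx]))

end SoftDistance

/-! ### Transplantation -/

section Transplantation

open scoped Gradient ContDiff
open LinearMap (BilinForm)
open Metric

variable {Ω Ω' V W : Set (EucN N)}

lemma IsMinMaxBound.map_linearIsometry {X Y : Type*} [NormedAddCommGroup X]
    [InnerProductSpace ℝ X] [NormedAddCommGroup Y] [InnerProductSpace ℝ Y] {Q : BilinForm ℝ X}
    {Q' : BilinForm ℝ Y} {n : ℕ} {a c : ℝ} (h : IsMinMaxBound Q n c) (T : X →ₗᵢ[ℝ] Y) (ha : 0 ≤ a)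
    (hT : ∀ x, Q' (T x) (T x) = a * Q x x) : IsMinMaxBound Q' n (a * c) := by
  obtain ⟨V, _, rfl, hle⟩ := h
  refine .map T.toLinearMap V (fun x _ hx => T.injective (hx.trans T.map_zero.symm)) fun x hx => ?_
  calc Q' (T x) (T x) = a * Q x x := hT x
    _ ≤ a * (c * ‖x‖ ^ 2) := mul_le_mul_of_nonneg_left (hle x hx) ha
    _ = a * c * ‖T x‖ ^ 2 := by rw [T.norm_map, mul_assoc]

/-- `C_c^∞(Ω)` embeds into `C_c^∞(Ω')` linearly and `L²`-isometrically in such a way that Dirichlet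
energies get multiplied by `a`. This carries spectral upper bounds from `Ω` to `Ω'`. -/
def EnergyEmbeds (Ω Ω' : Set (EucN N)) (a : ℝ) : Prop :=
  ∃ T : TestSpace Ω →ₗᵢ[ℝ] TestSpace Ω', ∀ u,
    dirichletForm Ω' (T u) (T u) = a * dirichletForm Ω u u

lemma EnergyEmbeds.refl (Ω : Set (EucN N)) : EnergyEmbeds Ω Ω 1 :=
  ⟨LinearIsometry.id, fun _ => (one_mul _).symm⟩

lemma EnergyEmbeds.trans {Ω'' : Set (EucN N)} {a b : ℝ} (h : EnergyEmbeds Ω Ω' a)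
    (h' : EnergyEmbeds Ω' Ω'' b) : EnergyEmbeds Ω Ω'' (b * a) := by
  obtain ⟨T, hT⟩ := h
  obtain ⟨S, hS⟩ := h'
  exact ⟨S.comp T, fun u => (hS (T u)).trans (by rw [hT, mul_assoc])⟩

lemma EnergyEmbeds.eigenvalE_le {a : ℝ} {n : ℕ} (h : EnergyEmbeds Ω Ω' a) (ha : 0 < a)
    (hne : ∃ c, IsMinMaxBound (dirichletForm Ω) (n + 1) c) :
    eigenvalE Ω' (n + 1) ≤ a * eigenvalE Ω (n + 1) := by
  obtain ⟨T, hT⟩ := h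
  rw [eigenvalE_eq_minMaxValue, eigenvalE_eq_minMaxValue, ← div_le_iff₀' ha]
  refine le_csInf hne fun c hc => (div_le_iff₀' ha).2 ?_
  exact minMaxValue_le dirichletForm_isPosSemidef.isNonneg (hc.map_linearIsometry T ha.le hT)

section Similarity

variable {s : ℝ} {a : EucN N}

lemma integral_comp_smul_add (hs : 0 < s) (a : EucN N) (f : EucN N → ℝ) :
    ∫ x, f (s • x + a) = (s ^ N)⁻¹ * ∫ x, f x := by
  rw [Measure.integral_comp_smul volume (fun x => f (x + a)) s, integral_add_right_eq_self,
    finrank_euclideanSpace_fin, abs_of_pos (by positivity), smul_eq_mul]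

lemma gradient_comp_smul_add (f : EucN N → ℝ) (s : ℝ) (a x : EucN N) :
    ∇ (fun x => f (s • x + a)) x = s • ∇ f (s • x + a) := by
  have h : fderiv ℝ (fun x => f (s • x + a)) x = s • fderiv ℝ f (s • x + a) := by
    rw [fderiv_comp_smul (f := fun x => f (x + a)) s, fderiv_comp_add_right]
  simp only [gradient, h, map_smul]

/-- Composition with the similarity `x ↦ s • x + a`, normalized to be an `L²` isometry. -/
def TestSpace.compSimilarity (Ω : Set (EucN N)) (hs : 0 < s) (a : EucN N) :
    TestSpace Ω →ₗ[ℝ] TestSpace ((fun x => s • x + a) ⁻¹' Ω) where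
  toFun u := √(s ^ N) • ⟨fun x => u (s • x + a), u.contDiff.comp (by fun_prop),
    u.hasCompactSupport.comp_homeomorph
      ((Homeomorph.smulOfNeZero s hs.ne').trans (Homeomorph.addRight a)),
    (tsupport_comp_subset_preimage u (by fun_prop)).trans (preimage_mono u.tsupport_subset)⟩
  map_add' u v := TestSpace.ext fun _ => mul_add _ _ _
  map_smul' c u := TestSpace.ext fun _ => mul_left_comm _ _ _

lemma TestSpace.compSimilarity_apply (hs : 0 < s) (u : TestSpace Ω) (x : EucN N) :
    compSimilarity Ω hs a u x = √(s ^ N) * u (s • x + a) := rfl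

lemma energyEmbeds_preimage_similarity (Ω : Set (EucN N)) (hs : 0 < s) (a : EucN N) :
    EnergyEmbeds Ω ((fun x => s • x + a) ⁻¹' Ω) (s ^ 2) := by
  have hsq : √(s ^ N) ^ 2 = s ^ N := Real.sq_sqrt (by positivity)
  have hcancel : s ^ N * (s ^ N)⁻¹ = 1 := mul_inv_cancel₀ (by positivity)
  refine ⟨⟨TestSpace.compSimilarity Ω hs a, fun u => ?_⟩, fun u => ?_⟩
  · refine (sq_eq_sq₀ (norm_nonneg _) (norm_nonneg _)).1 ?_
    simp only [TestSpace.norm_sq_eq, TestSpace.compSimilarity_apply, mul_pow, hsq,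
      integral_const_mul]
    rw [integral_comp_smul_add hs a fun x => u x ^ 2, ← mul_assoc, hcancel, one_mul]
  · have hgrad (x : EucN N) : ∇ (TestSpace.compSimilarity Ω hs a u) x =
        (√(s ^ N) * s) • ∇ u (s • x + a) := by
      rw [← smul_smul, ← gradient_comp_smul_add]
      exact gradient_fun_const_mul ((u.differentiable _).comp x (by fun_prop)) _
    simp only [LinearIsometry.coe_mk, dirichletForm_self, hgrad, norm_smul, mul_pow,
      Real.norm_eq_abs, sq_abs, hsq, integral_const_mul]
    rw [integral_comp_smul_add hs a fun x => ‖∇ u x‖ ^ 2]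
    linear_combination s ^ 2 * (∫ x, ‖∇ u x‖ ^ 2) * hcancel

end Similarity

section Union

/-- The sum of test functions on `V` and on `W`, as a test function on `V ∪ W`. -/
def TestSpace.sumUnion (V W : Set (EucN N)) :
    TestSpace V × TestSpace W →ₗ[ℝ] TestSpace (V ∪ W) where
  toFun p := ⟨fun x => p.1 x + p.2 x, p.1.contDiff.add p.2.contDiff,
    p.1.hasCompactSupport.add p.2.hasCompactSupport,
    (tsupport_add _ _).trans (union_subset_union p.1.tsupport_subset p.2.tsupport_subset)⟩
  map_add' _ _ := TestSpace.ext fun _ => add_add_add_comm _ _ _ _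
  map_smul' _ _ := TestSpace.ext fun _ => (mul_add _ _ _).symm

lemma TestSpace.norm_sumUnion_sq (hd : Disjoint V W) (u : TestSpace V) (v : TestSpace W) :
    ‖sumUnion V W (u, v)‖ ^ 2 = ‖u‖ ^ 2 + ‖v‖ ^ 2 := by
  rw [norm_sq_eq, norm_sq_eq, norm_sq_eq, ← integral_add u.integrable_sq v.integrable_sq]
  refine integral_congr_ae (.of_forall fun x => ?_)
  change (u x + v x) ^ 2 = u x ^ 2 + v x ^ 2
  have hdisj := hd.mono u.tsupport_subset v.tsupport_subset
  by_cases hx : x ∈ tsupport u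
  · simp [image_eq_zero_of_notMem_tsupport (hdisj.notMem_of_mem_left hx)]
  · simp [image_eq_zero_of_notMem_tsupport hx]

lemma TestSpace.dirichletForm_sumUnion (hd : Disjoint V W) (u : TestSpace V) (v : TestSpace W) :
    dirichletForm (V ∪ W) (sumUnion V W (u, v)) (sumUnion V W (u, v)) =
      dirichletForm V u u + dirichletForm W v v := by
  rw [dirichletForm_self, dirichletForm_self, dirichletForm_self,
    ← integral_add u.integrable_norm_gradient_sq v.integrable_norm_gradient_sq]
  refine integral_congr_ae (.of_forall fun x => ?_)
  change ‖∇ (fun x => u x + v x) x‖ ^ 2 = ‖∇ u x‖ ^ 2 + ‖∇ v x‖ ^ 2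
  rw [gradient_fun_add (u.differentiable x) (v.differentiable x)]
  have hdisj := hd.mono u.tsupport_subset v.tsupport_subset
  by_cases hx : x ∈ tsupport u
  · simp [gradient_eq_zero_of_notMem_tsupport (hdisj.notMem_of_mem_left hx)]
  · simp [gradient_eq_zero_of_notMem_tsupport hx]

lemma TestSpace.exists_eq_indicator (hV : IsOpen V) (hW : IsOpen W) (hd : Disjoint V W)
    (hΩ : Ω ⊆ V ∪ W) (u : TestSpace Ω) : ∃ v : TestSpace V, ∀ x, v x = V.indicator u x := by
  have hinter : tsupport u ∩ V = tsupport u ∩ Wᶜ := by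
    ext x
    refine and_congr_right fun hx => ⟨fun hxV => hd.notMem_of_mem_left hxV, fun hxW => ?_⟩
    exact (hΩ (u.tsupport_subset hx)).resolve_right hxW
  have hclosed : IsClosed (tsupport u ∩ V) :=
    hinter ▸ (isClosed_tsupport u).inter hW.isClosed_compl
  have hsupp : tsupport (V.indicator u) ⊆ tsupport u ∩ V := by
    refine closure_minimal (fun x hx => ?_) hclosed
    rw [support_indicator] at hx
    exact ⟨subset_tsupport u hx.2, hx.1⟩
  refine ⟨⟨V.indicator u, contDiff_iff_contDiffAt.2 fun x => ?_,
    u.hasCompactSupport.of_isClosed_subset (isClosed_tsupport _) (hsupp.trans inter_subset_left),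
    hsupp.trans inter_subset_right⟩, fun x => rfl⟩
  by_cases hx : x ∈ tsupport (V.indicator u)
  · exact u.contDiff.contDiffAt.congr_of_eventuallyEq
      ((eqOn_indicator (s := V) (f := u)).eventuallyEq_of_mem (hV.mem_nhds (hsupp hx).2))
  · exact contDiffAt_const.congr_of_eventuallyEq (notMem_tsupport_iff_eventuallyEq.1 hx)

lemma TestSpace.sumUnion_bijective (hV : IsOpen V) (hW : IsOpen W) (hd : Disjoint V W) :
    Function.Bijective (sumUnion V W) := by
  refine ⟨(injective_iff_map_eq_zero _).2 fun p hp => ?_, fun u => ?_⟩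
  · have h := norm_sumUnion_sq hd p.1 p.2
    rw [Prod.mk.eta, hp, norm_zero, zero_pow two_ne_zero] at h
    refine Prod.ext (norm_eq_zero.1 ?_) (norm_eq_zero.1 ?_) <;>
      nlinarith [sq_nonneg ‖p.1‖, sq_nonneg ‖p.2‖]
  · obtain ⟨v, hv⟩ := exists_eq_indicator hV hW hd subset_rfl u
    obtain ⟨w, hw⟩ := exists_eq_indicator hW hV hd.symm (union_comm V W).subset u
    refine ⟨(v, w), TestSpace.ext fun x => ?_⟩
    change v x + w x = u x
    rw [hv, hw, ← congrFun (indicator_union_of_disjoint hd u) x, indicator_eq_self.2]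
    exact (subset_tsupport u).trans u.tsupport_subset

lemma EnergyEmbeds.union {V' W' : Set (EucN N)} {a : ℝ} (hV : IsOpen V) (hW : IsOpen W)
    (hd : Disjoint V W) (hd' : Disjoint V' W') (hVV' : EnergyEmbeds V V' a)
    (hWW' : EnergyEmbeds W W' a) : EnergyEmbeds (V ∪ W) (V' ∪ W') a := by
  obtain ⟨S, hS⟩ := hVV'
  obtain ⟨T, hT⟩ := hWW'
  let e := LinearEquiv.ofBijective _ (TestSpace.sumUnion_bijective hV hW hd)
  let L := TestSpace.sumUnion V' W' ∘ₗ (S.toLinearMap.prodMap T.toLinearMap) ∘ₗ e.symm.toLinearMap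
  have hL (u : TestSpace V) (v : TestSpace W) :
      L (TestSpace.sumUnion V W (u, v)) = TestSpace.sumUnion V' W' (S u, T v) :=
    congrArg (fun p : TestSpace V × TestSpace W => TestSpace.sumUnion V' W' (S p.1, T p.2))
      (e.symm_apply_apply (u, v))
  refine ⟨⟨L, fun x => ?_⟩, fun x => ?_⟩ <;> obtain ⟨⟨u, v⟩, rfl⟩ := e.surjective x
  · refine (sq_eq_sq₀ (norm_nonneg _) (norm_nonneg _)).1 ?_
    change ‖L (TestSpace.sumUnion V W (u, v))‖ ^ 2 = ‖TestSpace.sumUnion V W (u, v)‖ ^ 2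
    rw [hL, TestSpace.norm_sumUnion_sq hd, TestSpace.norm_sumUnion_sq hd', S.norm_map, T.norm_map]
  · change dirichletForm _ (L (TestSpace.sumUnion V W (u, v))) (L (TestSpace.sumUnion V W (u, v))) =
      a * dirichletForm _ (TestSpace.sumUnion V W (u, v)) (TestSpace.sumUnion V W (u, v))
    rw [hL, TestSpace.dirichletForm_sumUnion hd, TestSpace.dirichletForm_sumUnion hd', hS, hT,
      mul_add]

end Union

lemma exists_energyEmbeds_union_subset_ball (hN : N ≠ 0) {W' : Set (EucN N)} {y : EucN N}
    {R ρ : ℝ} (hR : 0 ≤ R) (hρ : 0 ≤ ρ) (hV : IsOpen V) (hW : IsOpen W) (hd : Disjoint V W)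
    (hVρ : V ⊆ ball y ρ) (hW' : IsOpen W') (hW'R : W' ⊆ ball 0 R) (hvol : volume W' = volume W)
    (hWW' : EnergyEmbeds W W' 1) :
    ∃ U' ⊆ ball 0 (R + 2 * ρ), IsOpen U' ∧ volume U' = volume (V ∪ W) ∧
      EnergyEmbeds (V ∪ W) U' 1 := by
  have : NeZero N := ⟨hN⟩
  obtain ⟨e, he⟩ : ∃ e : EucN N, ‖e‖ = R + ρ :=
    ⟨EuclideanSpace.single 0 (R + ρ), by simp [abs_of_nonneg (add_nonneg hR hρ)]⟩
  set V' := (fun x : EucN N => (1 : ℝ) • x + (y - e)) ⁻¹' V with hV'_def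
  have hV' : IsOpen V' := hV.preimage (by fun_prop)
  have hvolV : volume V' = volume V := by
    simp only [hV'_def, one_smul, measure_preimage_add_right]
  have hV'ρ : V' ⊆ ball e ρ := fun x hx => by
    have hxy : (1 : ℝ) • x + (y - e) ∈ ball y ρ := hVρ hx
    rwa [one_smul, mem_ball, dist_eq_norm, add_sub_assoc, sub_sub_cancel_left,
      ← sub_eq_add_neg, ← dist_eq_norm] at hxy
  have hd' : Disjoint V' W' := by
    refine (ball_disjoint_ball ?_).mono hV'ρ hW'R
    rw [dist_zero_right, he, add_comm]
  have hVV' : EnergyEmbeds V V' 1 :=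
    one_pow (M := ℝ) 2 ▸ energyEmbeds_preimage_similarity V one_pos _
  refine ⟨V' ∪ W', union_subset (hV'ρ.trans (ball_subset_ball' ?_))
    (hW'R.trans (ball_subset_ball (by linarith))), hV'.union hW', ?_,
    hVV'.union hV hW hd hd' hWW'⟩
  · rw [dist_zero_right, he]
    linarith
  · rw [measure_union hd' hW'.measurableSet, measure_union hd hW.measurableSet, hvolV, hvol]

lemma biUnion_insert_ball_subset {X : Type*} [PseudoMetricSpace X] [DecidableEq X] {T : Finset X}
    {y z : X} {ρ : ℝ} (hρ : 0 ≤ ρ) (hz : z ∈ T) (hyz : dist y z ≤ 2 * ρ) :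
    ⋃ x ∈ insert y T, ball x ρ ⊆ ⋃ x ∈ T, ball x (3 * ρ) := by
  refine iUnion₂_subset fun x hx => ?_
  rcases Finset.mem_insert.1 hx with rfl | hx
  · exact (ball_subset_ball' (by linarith)).trans
      (subset_biUnion_of_mem (u := fun x => ball x (3 * ρ)) (Finset.mem_coe.2 hz))
  · exact (ball_subset_ball (by linarith)).trans
      (subset_biUnion_of_mem (u := fun x => ball x (3 * ρ)) (Finset.mem_coe.2 hx))

lemma exists_energyEmbeds_subset_ball (hN : N ≠ 0) (M : ℕ) {ρ : ℝ} (hρ : 0 < ρ) :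
    ∃ R > 0, ∀ (T : Finset (EucN N)) (U : Set (EucN N)), T.card ≤ M → IsOpen U →
      U ⊆ ⋃ y ∈ T, ball y ρ →
        ∃ U' ⊆ ball 0 R, IsOpen U' ∧ volume U' = volume U ∧ EnergyEmbeds U U' 1 := by
  classical
  induction M generalizing ρ with
  | zero =>
    refine ⟨1, one_pos, fun T U hT hU hUT => ⟨U, ?_, hU, rfl, .refl U⟩⟩
    rw [Nat.le_zero, Finset.card_eq_zero] at hT
    subst hT
    exact hUT.trans (by simp)
  | succ M ih =>
    obtain ⟨R₁, hR₁, hfar⟩ := ih hρ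
    obtain ⟨R₂, hR₂, hnear⟩ := ih (show 0 < 3 * ρ by positivity)
    refine ⟨max (R₁ + 2 * ρ) R₂, lt_max_of_lt_right hR₂, fun T U hT hU hUT => ?_⟩
    rcases T.eq_empty_or_nonempty with rfl | ⟨y, hy⟩
    · exact ⟨U, hUT.trans (by simp), hU, rfl, .refl U⟩
    have hcard : (T.erase y).card ≤ M := by
      rw [Finset.card_erase_of_mem hy]
      omega
    rw [← Finset.insert_erase hy] at hUT
    by_cases hsep : ∀ z ∈ T.erase y, 2 * ρ ≤ dist y z
    · have hrest : IsOpen (⋃ z ∈ T.erase y, ball z ρ) := isOpen_biUnion fun _ _ => isOpen_ball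
      have hdisj : Disjoint (ball y ρ) (⋃ z ∈ T.erase y, ball z ρ) :=
        disjoint_iUnion₂_right.2 fun z hz => ball_disjoint_ball (by linarith [hsep z hz])
      obtain ⟨W', hW'R, hW', hvol, hemb⟩ := hfar (T.erase y) _ hcard (hU.inter hrest)
        inter_subset_right
      have hsplit : U ∩ ball y ρ ∪ U ∩ ⋃ z ∈ T.erase y, ball z ρ = U := by
        rw [← inter_union_distrib_left]
        exact inter_eq_left.2 (hUT.trans_eq (Finset.set_biUnion_insert _ _ _))
      obtain ⟨U', hU'R, hU'⟩ := exists_energyEmbeds_union_subset_ball hN hR₁.le hρ.le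
        (hU.inter isOpen_ball) (hU.inter hrest)
        (hdisj.mono inter_subset_right inter_subset_right) inter_subset_right hW' hW'R hvol hemb
      rw [hsplit] at hU'
      exact ⟨U', hU'R.trans (ball_subset_ball (le_max_left _ _)), hU'⟩
    · push Not at hsep
      obtain ⟨z, hz, hyz⟩ := hsep
      obtain ⟨U', hU'R, hU'⟩ := hnear (T.erase y) U hcard hU
        (hUT.trans (biUnion_insert_ball_subset hρ.le hz hyz.le))
      exact ⟨U', hU'R.trans (ball_subset_ball (le_max_right _ _)), hU'⟩

lemma exists_energyEmbeds_volume_eq_one (hN : N ≠ 0) {U : Set (EucN N)} (hU : IsOpen U)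
    (hUtop : volume U ≠ ⊤) {R D : ℝ} (hUR : U ⊆ ball 0 R)
    (hD : 1 ≤ D * volume.real U ^ ((2 : ℝ) / N)) :
    ∃ Ω' ⊆ ball 0 (R * √D), IsOpen Ω' ∧ volume Ω' = 1 ∧
      EnergyEmbeds U Ω' (volume.real U ^ ((2 : ℝ) / N)) := by
  have hN' : (N : ℝ) ≠ 0 := by exact_mod_cast hN
  have ht : 0 < volume.real U := by
    refine measureReal_nonneg.lt_of_ne fun h => ?_
    rw [← h, Real.zero_rpow (by positivity), mul_zero] at hD
    exact one_pos.not_ge hD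
  have hU0 : volume U ≠ 0 := fun h => ht.ne' (by simp [measureReal_def, h])
  set s := volume.real U ^ ((1 : ℝ) / N) with hs_def
  have hs : 0 < s := Real.rpow_pos_of_pos ht _
  have hsN : s ^ N = volume.real U := by
    rw [hs_def, ← Real.rpow_mul_natCast ht.le, one_div_mul_cancel hN', Real.rpow_one]
  have hs2 : s ^ 2 = volume.real U ^ ((2 : ℝ) / N) := by
    rw [hs_def, ← Real.rpow_mul_natCast ht.le, Nat.cast_ofNat, one_div_mul_eq_div]
  have hsD : 1 ≤ √D * s := by
    rw [← hs2] at hD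
    calc (1 : ℝ) ≤ √(D * s ^ 2) := Real.one_le_sqrt.2 hD
      _ = √D * s := by rw [Real.sqrt_mul' _ (sq_nonneg s), Real.sqrt_sq hs.le]
  refine ⟨(fun x => s • x + 0) ⁻¹' U, fun x hx => ?_, hU.preimage (by fun_prop), ?_,
    hs2 ▸ energyEmbeds_preimage_similarity U hs 0⟩
  · have hxR : s * ‖x‖ < R := by
      simpa [norm_smul, abs_of_pos hs] using hUR hx
    rw [mem_ball_zero_iff]
    calc ‖x‖ ≤ √D * s * ‖x‖ := le_mul_of_one_le_left (norm_nonneg x) hsD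
      _ = s * ‖x‖ * √D := by ring
      _ < R * √D := mul_lt_mul_of_pos_right hxR
          (pos_of_mul_pos_left (one_pos.trans_le hsD) hs.le)
  · simp only [add_zero]
    rw [Measure.addHaar_preimage_smul _ hs.ne', finrank_euclideanSpace_fin, hsN,
      abs_of_pos (inv_pos.2 ht), ENNReal.ofReal_inv_of_pos ht, ofReal_measureReal hUtop,
      ENNReal.inv_mul_cancel hU0 hUtop]

lemma exists_energyEmbeds_subset_ball_volume_eq_one (hN : N ≠ 0) (M : ℕ) {ρ : ℝ} (hρ : 0 < ρ) :
    ∃ R > 0, ∀ (D : ℝ) (T : Finset (EucN N)) (U : Set (EucN N)), T.card ≤ M → IsOpen U →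
      U ⊆ ⋃ y ∈ T, ball y ρ → volume U ≠ ⊤ → 1 ≤ D * volume.real U ^ ((2 : ℝ) / N) →
        ∃ Ω' ⊆ ball 0 (R * √D), IsOpen Ω' ∧ volume Ω' = 1 ∧
          EnergyEmbeds U Ω' (volume.real U ^ ((2 : ℝ) / N)) := by
  obtain ⟨R, hR, hgather⟩ := exists_energyEmbeds_subset_ball hN M hρ
  refine ⟨R, hR, fun D T U hT hU hUT hUtop hD => ?_⟩
  obtain ⟨U', hU'R, hU', hvol, hemb⟩ := hgather T U hT hU hUT
  have hreal : volume.real U' = volume.real U := congrArg ENNReal.toReal hvol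
  obtain ⟨Ω', hΩ'R, hΩ', hΩ'vol, hemb'⟩ :=
    exists_energyEmbeds_volume_eq_one hN hU' (hvol ▸ hUtop) hU'R (hreal ▸ hD)
  have hcomp := hemb.trans hemb'
  rw [mul_one, hreal] at hcomp
  exact ⟨Ω', hΩ'R, hΩ', hΩ'vol, hcomp⟩

lemma ball_zero_subset_cube (R : ℝ) :
    ball (0 : EucN N) R ⊆ {z | ∀ p, z p ∈ Icc (-R) (-R + 2 * R)} := fun z hz p => by
  have hp : |z p| ≤ R := (PiLp.norm_apply_le z p).trans (mem_ball_zero_iff.1 hz).le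
  rw [abs_le] at hp
  exact ⟨hp.1, by linarith [hp.2]⟩

end Transplantation

/-- Proposition `allhere`. For every `K > 0` there is a constant
`R = R(k,K,N)` such that: if `Ω ⊆ ℝ^N` is an open set of unit volume with `λ_k(Ω) ≤ K`,
there exists another open set `Ω̂`, still of unit volume but contained in a cube of side
`R`, with `λ_i(Ω̂) ≤ λ_i(Ω)` for every `1 ≤ i ≤ k`. -/
theorem exists_bounded_replacement
    (N k : ℕ) (hN : 2 ≤ N) (hk : 1 ≤ k) (K : ℝ) (hK : 0 < K) :
    ∃ R : ℝ, 0 < R ∧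
      ∀ Ω : Set (EucN N), IsOpen Ω → volume Ω = 1 → eigenvalE Ω k ≤ K →
      ∃ Ωh : Set (EucN N), IsOpen Ωh ∧ volume Ωh = 1 ∧
        (∃ c : EucN N, Ωh ⊆ {z | ∀ p : Fin N, z p ∈ Icc (c p) (c p + R)}) ∧
        ∀ i : Fin k, eigenvalE Ωh (i.1 + 1) ≤ eigenvalE Ω (i.1 + 1) := by
  have hN0 : N ≠ 0 := by omega
  obtain ⟨M, ρ, hρ, htruncate⟩ := exists_subset_iUnion_ball hN k hK
  obtain ⟨R, hR, hgather⟩ := exists_energyEmbeds_subset_ball_volume_eq_one hN0 M hρ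
  set D := faberKrahnConst N * (2 * K)
  have hD : 0 < D := mul_pos faberKrahnConst_pos (by positivity)
  refine ⟨2 * (R * √D), by positivity, fun Ω hΩ hvol hlam => ?_⟩
  obtain ⟨Ω', hΩ'Ω, hΩ', ⟨T, hT, hcover⟩, hspec⟩ := htruncate Ω hΩ hvol hlam
  have hfin : volume Ω' ≠ ⊤ := measure_ne_top_of_subset hΩ'Ω (by simp [hvol])
  set a := volume.real Ω' ^ ((2 : ℝ) / N)
  have hlow : 1 ≤ D * a := by
    obtain ⟨hne, hle, -⟩ := hspec ⟨0, hk⟩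
    calc 1 ≤ faberKrahnConst N * a * eigenvalE Ω' (0 + 1) :=
          one_le_faberKrahnConst_mul_eigenvalE hN hfin hne
      _ ≤ faberKrahnConst N * a * (2 * K) :=
          mul_le_mul_of_nonneg_left hle (mul_nonneg faberKrahnConst_pos.le (by positivity))
      _ = D * a := by ring
  have ha : 0 < a := (pos_iff_pos_of_mul_pos (one_pos.trans_le hlow)).1 hD
  obtain ⟨Ωh, hΩhR, hΩh, hΩhvol, hemb⟩ := hgather D T Ω' hT hΩ' hcover hfin hlow
  refine ⟨Ωh, hΩh, hΩhvol, ⟨WithLp.toLp 2 fun _ => -(R * √D),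
    hΩhR.trans (ball_zero_subset_cube _)⟩, fun i => ?_⟩
  obtain ⟨hne, -, hle⟩ := hspec i
  exact (hemb.eigenvalE_le ha hne).trans (by rwa [mul_comm])

end SpectralMin
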